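/- arXiv:1810.05130 — 3 statements merged into one kernel-verified Lean document; each statement's English description precedes it below -/
import Mathlib

section
/- There exist absolute constants c₁ ∈ (0,1) and C₂ > 0 with the following property. Let d ≥ 1, m : Fin d → ℕ with m_j ≥ 1, G = Π_j ZMod (m_j), n = Π_j m_j, and k ≥ 1. For a real number a, let ⟨a⟩ denote the unique element of (−1/2, 1/2] with a − ⟨a⟩ ∈ ℤ. Fix x ∈ G with x ≠ 0; let x_j ∈ {0, …, m_j − 1} be the integer representative of the j-th coordinate of x, set s_*(x) = max_j ( m_j / gcd(x_j, m_j) ) (with gcd(0, m) = m), and for z ∈ G set x̄·z = Σ_j x_j·z_j / m_j ∈ ℝ, where z_j ∈ {0, …, m_j − 1} is the integer representative of the j-th coordinate of z. Let Z_1, …, Z_k be independent, each uniform on G. Then: if s_*(x) ≤ C₂·n^{1/k}, the probability that (1/k)·Σ_{i=1}^k ⟨x̄·Z_i⟩² ≤ c₁·n^{−2/k} is at most s_*(x)^{−9k/10}; and if s_*(x) > C₂·n^{1/k}, this probability is at most 2^{−k}/n. -/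
open Real
open scoped Classical

/-- The signed fractional part of `a`: the unique element of `(-1/2, 1/2]`
such that `a - sfrac a ∈ ℤ`. -/
noncomputable def sfrac (a : ℝ) : ℝ := a - ⌈a - 1/2⌉

/-!
Under `z ↦ x̄·z mod 1`, a uniform `z ∈ G` becomes uniform on a finite subgroup of the circle
`ℝ/ℤ`, and this subgroup has `q ≥ s_*` elements because it contains a point of order
`m_j / gcd(x_j, m_j)` for every `j`. It consists of the multiples of `1/q`, so comparison with a
geometric series bounds the mean of `exp (-t‖·‖)` by `1/q + 2/t`. By Cauchy–Schwarz a small mean of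
squares forces a small mean of absolute values, and Chernoff's bound then gives the probability at
most `(exp (t * a) * (1/q + 2/t)) ^ k`, where `a = √c₁ * n ^ (-1/k)`. In the two cases `t` is a
large constant times `s_*` and `n ^ (1/k)` respectively.
-/

open scoped BigOperators

section Probability

variable {Ω : Type*} [Fintype Ω]

/-- The small ball probability of a function `u` on a finite set: the probability that the mean of
the squares of `k` independent uniform samples of `u` is at most `A`. -/
noncomputable def smallBallProb (u : Ω → ℝ) (k : ℕ) (A : ℝ) : ℝ :=
  ((Finset.univ.filter fun Z : Fin k → Ω => (1 / (k : ℝ)) * ∑ i, u (Z i) ^ 2 ≤ A).card : ℝ) /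
    (Fintype.card (Fin k → Ω) : ℝ)

lemma sum_abs_le_of_mean_sq_le {ι : Type*} [Fintype ι] {v : ι → ℝ} {a : ℝ}
    (ha : 0 ≤ a) (h : 1 / (Fintype.card ι : ℝ) * ∑ i, v i ^ 2 ≤ a ^ 2) :
    ∑ i, |v i| ≤ Fintype.card ι * a := by
  rcases isEmpty_or_nonempty ι
  · simp
  rw [mul_comm, ← div_le_iff₀ (Nat.cast_pos.mpr Fintype.card_pos)]
  refine le_of_sq_le_sq ?_ ha
  calc ((∑ i, |v i|) / Fintype.card ι) ^ 2 ≤ (∑ i, |v i| ^ 2) / Fintype.card ι :=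
        sum_div_card_sq_le_sum_sq_div_card
    _ = 1 / (Fintype.card ι : ℝ) * ∑ i, v i ^ 2 := by simp only [sq_abs, one_div_mul_eq_div]
    _ ≤ a ^ 2 := h

lemma chernoff_card_filter_sum_le (u : Ω → ℝ) (k : ℕ) {t : ℝ} (ht : 0 ≤ t) (a : ℝ) :
    ((Finset.univ.filter fun Z : Fin k → Ω => ∑ i, u (Z i) ≤ k * a).card : ℝ) /
      (Fintype.card (Fin k → Ω) : ℝ) ≤ (exp (t * a) * 𝔼 ω, exp (-(t * u ω))) ^ k := by
  have markov : ((Finset.univ.filter fun Z : Fin k → Ω => ∑ i, u (Z i) ≤ k * a).card : ℝ) ≤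
      ∑ Z : Fin k → Ω, exp (t * a) ^ k * ∏ i, exp (-(t * u (Z i))) := by
    rw [Finset.cast_card, Finset.sum_filter]
    refine Finset.sum_le_sum fun Z _ => ?_
    split_ifs with hZ
    · rw [← exp_nat_mul, ← exp_sum, ← exp_add, Finset.sum_neg_distrib, ← Finset.mul_sum]
      exact one_le_exp (by nlinarith)
    · positivity
  calc _ ≤ (∑ Z : Fin k → Ω, exp (t * a) ^ k * ∏ i, exp (-(t * u (Z i)))) /
        (Fintype.card (Fin k → Ω) : ℝ) := by gcongr
    _ = (exp (t * a) * 𝔼 ω, exp (-(t * u ω))) ^ k := by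
      rw [← Finset.mul_sum, ← Fintype.sum_pow (fun ω => exp (-(t * u ω))),
        Fintype.expect_eq_sum_div_card, Fintype.card_fun, Fintype.card_fin, Nat.cast_pow, mul_pow,
        div_pow, mul_div_assoc]

lemma smallBallProb_sq_le (u : Ω → ℝ) (k : ℕ) {t a : ℝ} (ht : 0 ≤ t) (ha : 0 ≤ a) :
    smallBallProb u k (a ^ 2) ≤ (exp (t * a) * 𝔼 ω, exp (-(t * |u ω|))) ^ k := by
  refine le_trans ?_ (chernoff_card_filter_sum_le (|u ·|) k ht a)
  unfold smallBallProb
  refine div_le_div_of_nonneg_right (Nat.cast_le.mpr <| Finset.card_le_card ?_) (Nat.cast_nonneg _)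
  refine Finset.monotone_filter_right _ fun Z _ hZ => ?_
  simpa only [Fintype.card_fin] using
    sum_abs_le_of_mean_sq_le ha (v := fun i => u (Z i)) (by simpa only [Fintype.card_fin] using hZ)

end Probability

lemma expect_comp_of_surjective {G H : Type*} [AddGroup G] [AddGroup H] [Fintype G] [Fintype H]
    {M : Type*} [AddCommMonoid M] [Module ℚ≥0 M] (φ : G →+ H) (hφ : Function.Surjective φ)
    (f : H → M) : 𝔼 g, f (φ g) = 𝔼 h, f h := by
  obtain ⟨σ, hσ⟩ := hφ.hasRightInverse
  calc 𝔼 g, f (φ g) = 𝔼 h : H, 𝔼 g, f (φ (g + σ h)) := by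
        rw [← Fintype.expect_const (ι := H) (𝔼 g, f (φ g))]
        refine Finset.expect_congr rfl fun h _ => ?_
        exact (Fintype.expect_equiv (Equiv.addRight (σ h)) _ _ fun _ => rfl).symm
    _ = 𝔼 g : G, 𝔼 h, f (φ g + h) := by
        rw [Finset.expect_comm]
        simp only [map_add, hσ _]
    _ = 𝔼 _g : G, 𝔼 h, f h :=
        Finset.expect_congr rfl fun g _ =>
          Fintype.expect_equiv (Equiv.addLeft (φ g)) _ _ fun _ => rfl
    _ = 𝔼 h, f h := Fintype.expect_const _

section Circle

lemma sum_pow_min_le {ρ : ℝ} (hρ : 0 ≤ ρ) (q : ℕ) :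
    ∑ j ∈ Finset.range q, ρ ^ min j (q - j) ≤ (1 + ρ) * ∑ j ∈ Finset.range q, ρ ^ j := by
  have pow_min_le (j : ℕ) : ρ ^ min j (q - j) ≤ ρ ^ j + ρ ^ (q - j) := by
    rcases min_choice j (q - j) with h | h <;> rw [h]
    · exact le_add_of_nonneg_right (by positivity)
    · exact le_add_of_nonneg_left (by positivity)
  have reflect : ∑ j ∈ Finset.range q, ρ ^ (q - j) = ρ * ∑ j ∈ Finset.range q, ρ ^ j := by
    rw [← Finset.sum_range_reflect (ρ ^ ·), Finset.mul_sum]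
    refine Finset.sum_congr rfl fun j hj => ?_
    rw [← pow_succ']
    congr 1
    have := Finset.mem_range.mp hj
    omega
  calc ∑ j ∈ Finset.range q, ρ ^ min j (q - j)
      ≤ ∑ j ∈ Finset.range q, (ρ ^ j + ρ ^ (q - j)) := Finset.sum_le_sum fun j _ => pow_min_le j
    _ = (1 + ρ) * ∑ j ∈ Finset.range q, ρ ^ j := by
        rw [Finset.sum_add_distrib, reflect, one_add_mul]

lemma sum_exp_neg_min_le {δ : ℝ} (hδ : 0 < δ) (q : ℕ) :
    ∑ j ∈ Finset.range q, exp (-(δ * (min j (q - j) : ℕ))) ≤ 1 + 2 / δ := by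
  set ρ := exp (-δ) with hρ
  have hρ_pos : 0 < ρ := exp_pos _
  have exp_eq (i : ℕ) : exp (-(δ * i)) = ρ ^ i := by
    rw [hρ, ← exp_nat_mul, mul_neg, mul_comm]
  have ratio_le : ρ ≤ 1 / δ * (1 - ρ) := by
    have : ρ * (δ + 1) ≤ 1 := by
      rw [hρ, exp_neg, inv_mul_le_one₀ (exp_pos _)]
      exact add_one_le_exp δ
    rw [one_div, ← div_eq_inv_mul, le_div_iff₀ hδ]
    linarith
  have geom_le : (1 - ρ) * ∑ j ∈ Finset.range q, ρ ^ j ≤ 1 := by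
    rw [mul_neg_geom_sum]
    exact sub_le_self 1 (by positivity)
  calc ∑ j ∈ Finset.range q, exp (-(δ * (min j (q - j) : ℕ)))
      = ∑ j ∈ Finset.range q, ρ ^ min j (q - j) := by simp only [exp_eq]
    _ ≤ (1 + ρ) * ∑ j ∈ Finset.range q, ρ ^ j := sum_pow_min_le hρ_pos.le q
    _ = (1 - ρ + 2 * ρ) * ∑ j ∈ Finset.range q, ρ ^ j := by ring
    _ ≤ (1 - ρ + 2 * (1 / δ * (1 - ρ))) * ∑ j ∈ Finset.range q, ρ ^ j := by gcongr
    _ = (1 + 2 / δ) * ((1 - ρ) * ∑ j ∈ Finset.range q, ρ ^ j) := by ring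
    _ ≤ 1 + 2 / δ := mul_le_of_le_one_right (by positivity) geom_le

lemma expect_exp_neg_norm_subgroup_le (H : AddSubgroup UnitAddCircle) [Fintype H] {t : ℝ}
    (ht : 0 < t) : 𝔼 y : H, exp (-(t * ‖(y : UnitAddCircle)‖)) ≤
      1 / (Fintype.card H : ℝ) + 2 / t := by
  set q := Fintype.card H
  have hq : 0 < q := Fintype.card_pos
  have exists_div (y : H) : ∃ j < q, ((j / q : ℝ) : UnitAddCircle) = y := by
    simpa only [mul_one] using (AddCircle.nsmul_eq_zero_iff (p := (1 : ℝ)) hq).mp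
      (by exact_mod_cast congrArg Subtype.val (card_nsmul_eq_zero (x := y)))
  choose j hj_lt hj using exists_div
  have hj_inj : Function.Injective j := fun y y' h => Subtype.ext (by rw [← hj y, ← hj y', h])
  have norm_eq (y : H) : t * ‖(y : UnitAddCircle)‖ = t / q * (min (j y) (q - j y) : ℕ) := by
    have h := AddCircle.norm_div_natCast (p := (1 : ℝ)) (m := j y) (n := q)
    rw [mul_one, one_mul, Nat.mod_eq_of_lt (hj_lt y), hj] at h
    rw [h]; ring
  rw [Fintype.expect_eq_sum_div_card, div_le_iff₀ (by positivity)]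
  calc ∑ y : H, exp (-(t * ‖(y : UnitAddCircle)‖))
      = ∑ i ∈ Finset.univ.image j, exp (-(t / q * (min i (q - i) : ℕ))) := by
        rw [Finset.sum_image hj_inj.injOn]
        simp only [norm_eq]
    _ ≤ ∑ i ∈ Finset.range q, exp (-(t / q * (min i (q - i) : ℕ))) := by
        refine Finset.sum_le_sum_of_subset_of_nonneg ?_ fun _ _ _ => (exp_pos _).le
        exact Finset.image_subset_iff.mpr fun y _ => Finset.mem_range.mpr (hj_lt y)
    _ ≤ 1 + 2 / (t / q) := sum_exp_neg_min_le (by positivity) q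
    _ = (1 / (q : ℝ) + 2 / t) * q := by field_simp

variable {G : Type*} [AddGroup G] [Fintype G] (χ : G →+ UnitAddCircle)

lemma expect_exp_neg_norm_le {s : ℕ} (hs : 0 < s) (hsχ : s ≤ Nat.card χ.range) {t : ℝ}
    (ht : 0 < t) : 𝔼 g, exp (-(t * ‖χ g‖)) ≤ 1 / (s : ℝ) + 2 / t := by
  calc 𝔼 g, exp (-(t * ‖χ g‖)) = 𝔼 y : χ.range, exp (-(t * ‖(y : UnitAddCircle)‖)) :=
        expect_comp_of_surjective χ.rangeRestrict χ.rangeRestrict_surjective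
          fun y => exp (-(t * ‖(y : UnitAddCircle)‖))
    _ ≤ 1 / (Fintype.card χ.range : ℝ) + 2 / t := expect_exp_neg_norm_subgroup_le χ.range ht
    _ ≤ 1 / (s : ℝ) + 2 / t := by
        rw [Nat.card_eq_fintype_card] at hsχ
        gcongr

variable (k : ℕ) {s : ℕ}

lemma smallBallProb_norm_le_of_exp_mul_le (hs : 0 < s) (hsχ : s ≤ Nat.card χ.range) {t a b : ℝ}
    (ht : 0 < t) (ha : 0 ≤ a) (h : exp (t * a) * (1 / s + 2 / t) ≤ b) :
    smallBallProb (‖χ ·‖) k (a ^ 2) ≤ b ^ k := by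
  refine (smallBallProb_sq_le (‖χ ·‖) k ht.le ha).trans ?_
  simp only [abs_norm]
  have : 0 ≤ 𝔼 g, exp (-(t * ‖χ g‖)) := Finset.expect_nonneg fun _ _ => (exp_pos _).le
  gcongr
  calc exp (t * a) * 𝔼 g, exp (-(t * ‖χ g‖)) ≤ exp (t * a) * (1 / s + 2 / t) := by
        gcongr
        exact expect_exp_neg_norm_le χ hs hsχ ht
    _ ≤ b := h

lemma smallBallProb_norm_le_rpow_pow (hs : 2 ≤ s) (hsχ : s ≤ Nat.card χ.range) {N : ℝ}
    (hsN : (s : ℝ) ≤ 4 * N) :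
    smallBallProb (‖χ ·‖) k ((1 / 10 ^ 4 / N) ^ 2) ≤ ((s : ℝ) ^ (-(9 : ℝ) / 10)) ^ k := by
  have hs_two : (2 : ℝ) ≤ s := by exact_mod_cast hs
  have hs_pos : (0 : ℝ) < s := by linarith
  have hN : 0 < N := by linarith
  refine smallBallProb_norm_le_of_exp_mul_le χ k (by omega) hsχ (t := 100 * s) (by positivity)
    (by positivity) ?_
  have exponent_le : 100 * s * (1 / 10 ^ 4 / N) ≤ 1 / 25 := by
    field_simp; linarith
  have le_rpow : (17 / 16 : ℝ) ≤ (s : ℝ) ^ (1 / 10 : ℝ) := by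
    rw [one_div, le_rpow_inv_iff_of_pos (by norm_num) hs_pos.le (by norm_num)]
    exact le_trans (by norm_num) hs_two
  calc exp (100 * s * (1 / 10 ^ 4 / N)) * (1 / s + 2 / (100 * s))
      ≤ exp (1 / 25) * (1 / s + 2 / (100 * s)) := by gcongr
    _ ≤ 1 / (1 - 1 / 25) * (1 / s + 2 / (100 * s)) := by
        gcongr
        exact exp_bound_div_one_sub_of_interval (by norm_num) (by norm_num)
    _ = 17 / 16 * (s : ℝ)⁻¹ := by field_simp; norm_num
    _ ≤ (s : ℝ) ^ (1 / 10 : ℝ) * (s : ℝ)⁻¹ := by gcongr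
    _ = (s : ℝ) ^ (-(9 : ℝ) / 10) := by
        rw [← rpow_neg_one, ← rpow_add hs_pos]; norm_num

lemma smallBallProb_norm_le_one_div_pow (hsχ : s ≤ Nat.card χ.range) {N : ℝ} (hN : 0 < N)
    (hsN : 4 * N < s) :
    smallBallProb (‖χ ·‖) k ((1 / 10 ^ 4 / N) ^ 2) ≤ (1 / (2 * N)) ^ k := by
  have hs_pos : (0 : ℝ) < s := by linarith
  refine smallBallProb_norm_le_of_exp_mul_le χ k (by exact_mod_cast hs_pos) hsχ (t := 100 * N)
    (by positivity) (by positivity) ?_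
  calc exp (100 * N * (1 / 10 ^ 4 / N)) * (1 / s + 2 / (100 * N))
      = exp (1 / 100) * (1 / s + 2 / (100 * N)) := by congr 2; field_simp; norm_num
    _ ≤ 1 / (1 - 1 / 100) * (1 / (4 * N) + 2 / (100 * N)) := by
        gcongr
        exact exp_bound_div_one_sub_of_interval (by norm_num) (by norm_num)
    _ ≤ 1 / (2 * N) := by field_simp; norm_num

end Circle

lemma abs_sfrac_le (a : ℝ) : |sfrac a| ≤ 1 / 2 := by
  have h_lt := Int.ceil_lt_add_one (a - 1 / 2)
  have h_le := Int.le_ceil (a - 1 / 2)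
  rw [sfrac, abs_le]
  constructor <;> linarith

lemma norm_coe_unitAddCircle_eq_abs_sfrac (a : ℝ) : ‖(a : UnitAddCircle)‖ = |sfrac a| := by
  have coe_eq : ((sfrac a : ℝ) : UnitAddCircle) = a := by
    rw [sfrac, AddCircle.coe_sub, sub_eq_self.mpr]
    exact AddCircle.coe_eq_zero_iff _ |>.mpr ⟨_, zsmul_one _⟩
  rw [← coe_eq, AddCircle.norm_coe_eq_abs_iff 1 one_ne_zero, abs_one]
  exact abs_sfrac_le a

lemma two_le_sup_addOrderOf {ι : Type*} [Fintype ι] {A : ι → Type*} [∀ j, AddGroup (A j)]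
    [∀ j, Finite (A j)] {x : ∀ j, A j} (hx : x ≠ 0) :
    2 ≤ Finset.univ.sup fun j => addOrderOf (x j) := by
  obtain ⟨j, hj⟩ := Function.ne_iff.mp hx
  refine le_trans ?_ (Finset.le_sup (f := fun j => addOrderOf (x j)) (Finset.mem_univ j))
  have h_ne : addOrderOf (x j) ≠ 1 := fun h => hj (AddMonoid.addOrderOf_eq_one_iff.mp h)
  have := addOrderOf_pos (x j)
  omega

section DotCharacter

variable {ι : Type*} [Fintype ι] {m : ι → ℕ} [∀ j, NeZero (m j)]

/-- The character `z ↦ x̄·z mod 1` of `Π j, ZMod (m j)` attached to `x`. -/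
noncomputable def dotChar (x : ∀ j, ZMod (m j)) : (∀ j, ZMod (m j)) →+ UnitAddCircle :=
  ∑ j, ZMod.toAddCircle.comp ((AddMonoidHom.mulLeft (x j)).comp (Pi.evalAddMonoidHom _ j))

lemma dotChar_apply (x z : ∀ j, ZMod (m j)) :
    dotChar x z = ∑ j, ZMod.toAddCircle (x j * z j) := by
  simp [dotChar]

lemma sq_norm_dotChar (x z : ∀ j, ZMod (m j)) :
    ‖dotChar x z‖ ^ 2 = sfrac (∑ j, ((x j).val : ℝ) * ((z j).val : ℝ) / (m j)) ^ 2 := by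
  have toAddCircle_mul (j : ι) : ZMod.toAddCircle (x j * z j) =
      (((x j).val * (z j).val / m j : ℝ) : UnitAddCircle) := by
    simpa using ZMod.toAddCircle_natCast (N := m j) ((x j).val * (z j).val)
  rw [← sq_abs (sfrac _), ← norm_coe_unitAddCircle_eq_abs_sfrac, dotChar_apply]
  simp only [toAddCircle_mul]
  rw [← QuotientAddGroup.mk_sum]

lemma dotChar_single_one [DecidableEq ι] (x : ∀ j, ZMod (m j)) (j : ι) :
    dotChar x (Pi.single j 1) = ZMod.toAddCircle (x j) := by
  rw [dotChar_apply, Fintype.sum_eq_single j, Pi.single_eq_same, mul_one]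
  intro i hi
  rw [Pi.single_eq_of_ne hi, mul_zero, map_zero]

lemma div_gcd_val_eq_addOrderOf {M : ℕ} [NeZero M] (a : ZMod M) :
    M / Nat.gcd a.val M = addOrderOf a := by
  rw [Nat.gcd_comm, ← ZMod.addOrderOf_coe _ (NeZero.ne M), ZMod.natCast_zmod_val]

lemma addOrderOf_le_card_range_dotChar (x : ∀ j, ZMod (m j)) (j : ι) :
    addOrderOf (x j) ≤ Nat.card (dotChar x).range := by
  rw [← addOrderOf_injective _ (ZMod.toAddCircle_injective (m j)), ← dotChar_single_one]
  exact Nat.le_of_dvd Nat.card_pos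
    (AddSubgroup.addOrderOf_dvd_natCard _ (AddMonoidHom.mem_range.mpr ⟨_, rfl⟩))

end DotCharacter

theorem prob_small_fractional_sum_bound_general : ∃ c₁ C₂ : ℝ, 0 < c₁ ∧ c₁ < 1 ∧ 0 < C₂ ∧
    ∀ {G : Type*} [AddGroup G] [Fintype G] (χ : G →+ UnitAddCircle) {k s : ℕ}, 1 ≤ k → 2 ≤ s →
    s ≤ Nat.card χ.range → ∀ {n : ℝ}, 0 < n →
    let prob := smallBallProb (‖χ ·‖) k (c₁ * n ^ (-(2 : ℝ) / (k : ℝ)))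
    ((s : ℝ) ≤ C₂ * n ^ ((1 : ℝ) / (k : ℝ)) → prob ≤ (s : ℝ) ^ (-(9 : ℝ) * (k : ℝ) / 10)) ∧
    ((s : ℝ) > C₂ * n ^ ((1 : ℝ) / (k : ℝ)) → prob ≤ (2 : ℝ) ^ (-(k : ℝ)) / n) := by
  refine ⟨(1 / 10 ^ 4) ^ 2, 4, by norm_num, by norm_num, by norm_num, ?_⟩
  intro G _ _ χ k s hk hs hsχ n hn prob
  have hN : 0 < n ^ ((1 : ℝ) / k) := rpow_pos_of_pos hn _
  have radius_eq :
      (1 / 10 ^ 4) ^ 2 * n ^ (-(2 : ℝ) / k) = (1 / 10 ^ 4 / n ^ ((1 : ℝ) / k)) ^ 2 := by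
    rw [div_pow _ (n ^ _), ← rpow_mul_natCast hn.le, div_eq_mul_inv _ (n ^ _), ← rpow_neg hn.le]
    ring_nf
  have pow_root : (n ^ ((1 : ℝ) / k)) ^ k = n := by
    rw [one_div, rpow_inv_natCast_pow hn.le (by omega)]
  simp only [prob, radius_eq]
  refine ⟨fun hsN => ?_, fun hsN => ?_⟩
  · rw [mul_div_right_comm, rpow_mul_natCast (Nat.cast_nonneg s)]
    exact smallBallProb_norm_le_rpow_pow χ k hs hsχ hsN
  · have bound_eq : (2 : ℝ) ^ (-(k : ℝ)) / n = (1 / (2 * n ^ ((1 : ℝ) / k))) ^ k := by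
      rw [rpow_neg zero_le_two, rpow_natCast, one_div_pow, mul_pow, pow_root, one_div, mul_inv,
        div_eq_mul_inv]
    rw [bound_eq]
    exact smallBallProb_norm_le_one_div_pow χ k hsχ hN hsN

/-- Probability bound on small normalized sums of squared fractional parts of
random inner products: there are absolute constants `c₁ ∈ (0,1)` and `C₂ > 0`
such that for any nonzero `x` in the torus `G = Π_j ZMod (m j)`, with
`s_* = max_j (m j / gcd (x j) (m j))`, the probability (over `Z` uniform on
`G^k`) that `(1/k)·∑ᵢ ⟨x̄·Zᵢ⟩² ≤ c₁ n^{-2/k}` is at most `s_*^{-9k/10}` when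
`s_* ≤ C₂ n^{1/k}`, and at most `2^{-k}/n` otherwise. -/
theorem prob_small_fractional_sum_bound : ∃ c₁ C₂ : ℝ, 0 < c₁ ∧ c₁ < 1 ∧ 0 < C₂ ∧
    ∀ (d : ℕ), 1 ≤ d → ∀ (m : Fin d → ℕ), (∀ j, 1 ≤ m j) →
    ∀ [∀ j, NeZero (m j)],
    ∀ (k : ℕ), 1 ≤ k →
    ∀ (x : ∀ j, ZMod (m j)), x ≠ 0 →
    let n : ℕ := ∏ j, m j
    let s : ℕ := Finset.univ.sup fun j => m j / Nat.gcd ((x j).val) (m j)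
    let prob : ℝ :=
      ((Finset.univ.filter fun Z : Fin k → (∀ j, ZMod (m j)) =>
          (1/(k:ℝ)) * ∑ i, (sfrac (∑ j, ((x j).val : ℝ) * (((Z i) j).val : ℝ) / (m j)))^2
            ≤ c₁ * (n:ℝ) ^ (-(2:ℝ)/(k:ℝ))).card : ℝ) /
        (Fintype.card (Fin k → ∀ j, ZMod (m j)) : ℝ)
    ((s : ℝ) ≤ C₂ * (n:ℝ) ^ ((1:ℝ)/(k:ℝ)) → prob ≤ (s:ℝ) ^ (-(9:ℝ)*(k:ℝ)/10)) ∧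
    ((s : ℝ) > C₂ * (n:ℝ) ^ ((1:ℝ)/(k:ℝ)) → prob ≤ (2:ℝ) ^ (-(k:ℝ)) / (n:ℝ)) := by
  obtain ⟨c₁, C₂, hc₁, hc₁', hC₂, bound⟩ := prob_small_fractional_sum_bound_general
  refine ⟨c₁, C₂, hc₁, hc₁', hC₂, fun d _ m hm _ k hk x hx => ?_⟩
  simp only [div_gcd_val_eq_addOrderOf, ← sq_norm_dotChar]
  exact bound (dotChar x) hk (two_le_sup_addOrderOf hx)
    (Finset.sup_le fun j _ => addOrderOf_le_card_range_dotChar x j)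
    (by exact_mod_cast Finset.prod_pos fun j _ => hm j)
end

section
/- For s ≥ 0 define q_s : ℤ → ℝ by q_s(x) = Σ_{j=0}^∞ e^{−s}·s^{|x|+2j}/(|x|+2j)! · Nat.choose(|x|+2j, j) · 2^{−(|x|+2j)} (the distribution at time s of a rate-1 continuous-time simple random walk on ℤ started at 0). There exist constants c > 0 and C > 0 such that for every s ∈ (0, ∞) and every integer r with r ≥ √s, one has both c·r·(min(r/s, 1))·log(max(r/s, e)) ≤ −log( Σ_{x ≥ r} q_s(x) ) ≤ C·r·(min(r/s, 1))·log(max(r/s, e)), and c·max(s/r, 1) ≤ ( Σ_{x ≥ r} q_s(x) ) / q_s(r) ≤ C·max(s/r, 1). -/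
open Real

open scoped Nat

/-!
With `I_n` the modified Bessel functions, `q_s(x) = e^{-s} I_{|x|}(s)`, so the upper tail at `n` is
`e^{-s} ∑_{k ≥ n} I_k(s)`. The Laurent expansion `exp (s (z + z⁻¹) / 2) = ∑_m z^m I_{|m|}(s)`
gives the total mass at `z = 1` and Chernoff's bound at `z = exp l`. The recurrence
`s (I_n - I_{n+2}) = 2 (n + 1) I_{n+1}` has two uses. Summed over `n` it telescopes and bounds the
tail by a multiple of its first term. Combined with the monotonicity of `n ↦ I_n` it is a Harnack
inequality: `I_n` varies by a bounded factor over `k` steps as long as `k (n + k) = O(s)`, which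
bounds the tail from below.
-/

/-- The `j`-th term of the power series of the modified Bessel function `I_n` at `x`. -/
noncomputable def besselITerm (n : ℕ) (x : ℝ) (j : ℕ) : ℝ :=
  (x / 2) ^ (n + 2 * j) / (j ! * (n + j)!)

/-- The modified Bessel function of the first kind `I_n(x)` of integer order `n ≥ 0`. -/
noncomputable def besselI (n : ℕ) (x : ℝ) : ℝ := ∑' j, besselITerm n x j

/-- The tail `∑_{k ≥ n} I_k(x)`; multiplied by `e^{-x}`, it is the probability that the rate-1
simple random walk started at `0` is at or above `n` at time `x`. -/
noncomputable def besselITail (n : ℕ) (x : ℝ) : ℝ := ∑' k, besselI (n + k) x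

/-- The order of magnitude of `-log P(X_s ≥ r)`: it is `r² / s` for `r ≤ s`, and
`r log (max (r / s) e)` for `r ≥ s`. -/
noncomputable def tailRate (s r : ℝ) : ℝ := r * min (r / s) 1 * log (max (r / s) (exp 1))

section GeneratingFunction

lemma hasSum_prod_mul {ι κ : Type*} {f : ι → ℝ} {g : κ → ℝ} {a b : ℝ}
    (hf : HasSum f a) (hg : HasSum g b) : HasSum (fun p : ι × κ ↦ f p.1 * g p.2) (a * b) :=
  hf.mul hg (summable_mul_of_summable_norm hf.summable.norm hg.summable.norm)

lemma hasSum_pow_div_factorial (a : ℝ) : HasSum (fun n : ℕ ↦ a ^ n / n !) (exp a) := by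
  rw [exp_eq_exp_ℝ]
  exact NormedSpace.expSeries_div_hasSum_exp a

lemma hasSum_exp_add (a b : ℝ) :
    HasSum (fun p : ℕ × ℕ ↦ a ^ p.1 / p.1 ! * (b ^ p.2 / p.2 !)) (exp (a + b)) := by
  rw [exp_add]
  exact hasSum_prod_mul (hasSum_pow_div_factorial a) (hasSum_pow_div_factorial b)

/-- The bijection `(i, j) ↦ (i - j, min i j)`, which groups pairs of naturals by difference. -/
def subMinEquiv : ℕ × ℕ ≃ ℤ × ℕ where
  toFun p := (p.1 - p.2, min p.1 p.2)
  invFun q := (q.1.toNat + q.2, (-q.1).toNat + q.2)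
  left_inv p := by ext <;> dsimp only <;> omega
  right_inv q := by ext <;> dsimp only <;> omega

lemma zpow_mul_besselITerm_subMinEquiv {z : ℝ} (hz : z ≠ 0) (x : ℝ) (p : ℕ × ℕ) :
    z ^ (subMinEquiv p).1 * besselITerm (subMinEquiv p).1.natAbs x (subMinEquiv p).2 =
      (x / 2 * z) ^ p.1 / p.1 ! * ((x / 2 * z⁻¹) ^ p.2 / p.2 !) := by
  obtain ⟨i, j⟩ := p
  simp only [subMinEquiv, Equiv.coe_fn_mk, besselITerm]
  rw [zpow_sub₀ hz, zpow_natCast, zpow_natCast, mul_pow, mul_pow, inv_pow]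
  rcases le_total i j with h | h
  · obtain ⟨d, rfl⟩ := Nat.exists_eq_add_of_le h
    have hnat : ((i : ℤ) - (i + d : ℕ)).natAbs = d := by omega
    rw [hnat, min_eq_left h, add_comm d i]
    field_simp
    ring
  · obtain ⟨d, rfl⟩ := Nat.exists_eq_add_of_le h
    have hnat : (((j + d : ℕ) : ℤ) - j).natAbs = d := by omega
    rw [hnat, min_eq_right h, add_comm d j]
    field_simp
    ring

lemma hasSum_zpow_mul_besselITerm {z : ℝ} (hz : z ≠ 0) (x : ℝ) :
    HasSum (fun p : ℤ × ℕ ↦ z ^ p.1 * besselITerm p.1.natAbs x p.2)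
      (exp (x / 2 * z + x / 2 * z⁻¹)) := by
  rw [← subMinEquiv.hasSum_iff]
  exact (hasSum_exp_add _ _).congr_fun (zpow_mul_besselITerm_subMinEquiv hz x)

lemma summable_besselITerm (n : ℕ) (x : ℝ) : Summable (besselITerm n x) := by
  simpa using (hasSum_zpow_mul_besselITerm one_ne_zero x).summable.prod_factor (n : ℤ)

theorem hasSum_zpow_mul_besselI {z : ℝ} (hz : z ≠ 0) (x : ℝ) :
    HasSum (fun m : ℤ ↦ z ^ m * besselI m.natAbs x) (exp (x / 2 * z + x / 2 * z⁻¹)) :=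
  (hasSum_zpow_mul_besselITerm hz x).prod_fiberwise fun m ↦
    (summable_besselITerm m.natAbs x).hasSum.mul_left (z ^ m)

theorem hasSum_exp_mul_besselI (l x : ℝ) :
    HasSum (fun m : ℤ ↦ exp (l * m) * besselI m.natAbs x) (exp (x * cosh l)) := by
  convert hasSum_zpow_mul_besselI (exp_ne_zero l) x using 2 with m
  · rw [exp_mul, rpow_intCast]
  · rw [cosh_eq, exp_neg]
    ring

lemma hasSum_besselI_natAbs (x : ℝ) :
    HasSum (fun m : ℤ ↦ besselI m.natAbs x) (exp x) := by
  simpa using hasSum_exp_mul_besselI 0 x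

lemma summable_besselI_add (n : ℕ) (x : ℝ) : Summable fun k ↦ besselI (n + k) x :=
  (hasSum_besselI_natAbs x).summable.comp_injective (i := fun k : ℕ ↦ ((n + k : ℕ) : ℤ))
    fun a b h ↦ by simpa using h

lemma two_mul_besselITail_zero (x : ℝ) : 2 * besselITail 0 x = exp x + besselI 0 x := by
  have h := (hasSum_besselI_natAbs x).nat_add_neg
  simp only [Int.natAbs_neg, Int.natAbs_natCast, Int.natAbs_zero, ← two_mul] at h
  simpa [besselITail, tsum_mul_left] using h.tsum_eq

lemma besselITail_eq_add_succ (n : ℕ) (x : ℝ) :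
    besselITail n x = besselI n x + besselITail (n + 1) x := by
  simpa [besselITail, add_assoc, add_comm 1] using (summable_besselI_add n x).tsum_eq_zero_add

end GeneratingFunction

section Recurrence

lemma mul_besselITerm_zero (n : ℕ) (x : ℝ) :
    x * besselITerm n x 0 = 2 * (n + 1) * besselITerm (n + 1) x 0 := by
  simp only [besselITerm, Nat.factorial_succ, add_zero, mul_zero, pow_succ]
  push_cast
  field_simp

lemma mul_besselITerm_succ (n : ℕ) (x : ℝ) (j : ℕ) :
    x * besselITerm n x (j + 1) =
      x * besselITerm (n + 2) x j + 2 * (n + 1) * besselITerm (n + 1) x (j + 1) := by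
  have hfact₁ : (n + (j + 1))! = (n + j + 1) * (n + j)! := Nat.factorial_succ _
  have hfact₂ : (n + 2 + j)! = (n + j + 2) * ((n + j + 1) * (n + j)!) := by
    rw [← Nat.factorial_succ, ← Nat.factorial_succ]
    congr 1
    ring
  have hfact₃ : (n + 1 + (j + 1))! = (n + j + 2) * ((n + j + 1) * (n + j)!) := by
    rw [← hfact₂]
    congr 1
    ring
  simp only [besselITerm, hfact₁, hfact₂, hfact₃, Nat.factorial_succ, pow_add, pow_mul]
  push_cast
  field_simp
  ring

theorem mul_besselI_eq_add (n : ℕ) (x : ℝ) :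
    x * besselI n x = x * besselI (n + 2) x + 2 * (n + 1) * besselI (n + 1) x := by
  have hterms (m : ℕ) : besselI m x = besselITerm m x 0 + ∑' j, besselITerm m x (j + 1) :=
    (summable_besselITerm m x).tsum_eq_zero_add
  rw [hterms n, hterms (n + 1), mul_add, mul_add, mul_besselITerm_zero, besselI,
    ← tsum_mul_left, ← tsum_mul_left, ← tsum_mul_left, tsum_congr (mul_besselITerm_succ n x),
    ((summable_besselITerm (n + 2) x).mul_left x).tsum_add
      (((summable_nat_add_iff 1).mpr (summable_besselITerm (n + 1) x)).mul_left _)]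
  ring

end Recurrence

section Monotonicity

variable {x : ℝ}

lemma besselITerm_nonneg (hx : 0 ≤ x) (n j : ℕ) : 0 ≤ besselITerm n x j := by
  unfold besselITerm
  positivity

lemma half_pow_div_factorial_le_besselI (hx : 0 ≤ x) (n : ℕ) :
    (x / 2) ^ n / n ! ≤ besselI n x := by
  simpa [besselI, besselITerm] using
    (summable_besselITerm n x).le_tsum 0 fun j _ ↦ besselITerm_nonneg hx n j

lemma besselI_nonneg (hx : 0 ≤ x) (n : ℕ) : 0 ≤ besselI n x :=
  tsum_nonneg (besselITerm_nonneg hx n)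

lemma besselI_pos (hx : 0 < x) (n : ℕ) : 0 < besselI n x :=
  (by positivity : 0 < (x / 2) ^ n / n !).trans_le (half_pow_div_factorial_le_besselI hx.le n)

lemma besselI_le_besselITail (hx : 0 ≤ x) (n : ℕ) : besselI n x ≤ besselITail n x :=
  (summable_besselI_add n x).le_tsum 0 fun k _ ↦ besselI_nonneg hx (n + k)

lemma besselITail_pos (hx : 0 < x) (n : ℕ) : 0 < besselITail n x :=
  (besselI_pos hx n).trans_le (besselI_le_besselITail hx.le n)

lemma two_mul_besselITerm_succ_le (hx : 0 ≤ x) (n j : ℕ) :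
    2 * besselITerm (n + 1) x j ≤ besselITerm n x j + besselITerm n x (j + 1) := by
  have amgm : 2 * (x / 2) * (j + 1) ≤ (n + j + 1) * (j + 1) + (x / 2) ^ 2 := by
    have : (0 : ℝ) ≤ n * (j + 1) := by positivity
    linarith [sq_nonneg (x / 2 - (j + 1))]
  have hfact : (n + 1 + j)! = (n + j + 1) * (n + j)! := by
    rw [← Nat.factorial_succ]
    congr 1
    ring
  calc 2 * besselITerm (n + 1) x j
      = (x / 2) ^ (n + 2 * j) / ((j + 1) * j ! * ((n + j + 1) * (n + j)!)) *
          (2 * (x / 2) * (j + 1)) := by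
        simp only [besselITerm, hfact, pow_add]
        push_cast
        field_simp
    _ ≤ (x / 2) ^ (n + 2 * j) / ((j + 1) * j ! * ((n + j + 1) * (n + j)!)) *
          ((n + j + 1) * (j + 1) + (x / 2) ^ 2) := by gcongr
    _ = besselITerm n x j + besselITerm n x (j + 1) := by
        simp only [besselITerm, ← add_assoc, Nat.factorial_succ, mul_add, pow_add]
        push_cast
        field_simp

lemma besselI_succ_le (hx : 0 ≤ x) (n : ℕ) : besselI (n + 1) x ≤ besselI n x := by
  have hsum := summable_besselITerm n x
  have hshift := (summable_nat_add_iff 1).mpr hsum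
  have hterms := ((summable_besselITerm (n + 1) x).mul_left 2).tsum_le_tsum
    (two_mul_besselITerm_succ_le hx n) (hsum.add hshift)
  rw [tsum_mul_left, hsum.tsum_add hshift, ← besselI, ← besselI] at hterms
  have hfirst : besselI n x = besselITerm n x 0 + ∑' j, besselITerm n x (j + 1) :=
    hsum.tsum_eq_zero_add
  have hnonneg := besselITerm_nonneg hx n 0
  linarith

theorem besselI_antitone (hx : 0 ≤ x) : Antitone fun n ↦ besselI n x :=
  antitone_nat_of_succ_le (besselI_succ_le hx)

end Monotonicity

section TailVersusPoint

variable {x : ℝ}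

lemma two_mul_succ_mul_besselITail_succ_le (hx : 0 ≤ x) (n : ℕ) :
    2 * (n + 1) * besselITail (n + 1) x ≤ x * (besselI n x + besselI (n + 1) x) := by
  have hsum := summable_besselI_add n x
  have hsum₁ := summable_besselI_add (n + 1) x
  have hsum₂ := summable_besselI_add (n + 2) x
  have hterm (k : ℕ) : 2 * (n + 1) * besselI (n + 1 + k) x ≤
      x * besselI (n + k) x - x * besselI (n + 2 + k) x := by
    have hrec := mul_besselI_eq_add (n + k) x
    have hnonneg : 0 ≤ 2 * k * besselI (n + 1 + k) x := by
      have := besselI_nonneg hx (n + 1 + k)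
      positivity
    rw [add_right_comm n k 2, add_right_comm n k 1] at hrec
    push_cast at hrec
    linarith
  have htail : 2 * (n + 1) * besselITail (n + 1) x ≤
      x * besselITail n x - x * besselITail (n + 2) x := by
    have := (hsum₁.mul_left (2 * ((n : ℝ) + 1))).tsum_le_tsum hterm
      ((hsum.mul_left x).sub (hsum₂.mul_left x))
    rwa [(hsum.mul_left x).tsum_sub (hsum₂.mul_left x), tsum_mul_left, tsum_mul_left,
      tsum_mul_left] at this
  have hhead : besselITail n x = besselI n x + (besselI (n + 1) x + besselITail (n + 2) x) := by
    rw [besselITail_eq_add_succ n, besselITail_eq_add_succ (n + 1)]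
  rw [hhead] at htail
  linarith

theorem besselITail_le_mul_besselI (hx : 0 ≤ x) (n : ℕ) :
    besselITail n x ≤ (1 + x / (n + 1)) * besselI n x := by
  have hsucc : besselITail (n + 1) x ≤ x / (n + 1) * besselI n x := by
    rw [div_mul_eq_mul_div, le_div_iff₀ (by positivity)]
    have htail := two_mul_succ_mul_besselITail_succ_le hx n
    have hmono := mul_le_mul_of_nonneg_left (besselI_succ_le hx n) hx
    linarith
  rw [besselITail_eq_add_succ]
  linarith

theorem besselITail_le_max_mul_besselI {n : ℕ} (hx : 0 ≤ x) (hn : 0 < n) :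
    besselITail n x ≤ 2 * max (x / n) 1 * besselI n x := by
  refine (besselITail_le_mul_besselI hx n).trans
    (mul_le_mul_of_nonneg_right ?_ (besselI_nonneg hx n))
  have hdiv : x / (n + 1) ≤ x / n := by gcongr; linarith
  linarith [le_max_left (x / n) 1, le_max_right (x / n) 1]

lemma besselI_le_mul_besselI_succ (hx : 0 < x) (n : ℕ) :
    besselI n x ≤ (1 + 2 * (n + 1) / x) * besselI (n + 1) x := by
  have hrec := mul_besselI_eq_add n x
  have hmono := mul_le_mul_of_nonneg_left (besselI_succ_le hx.le (n + 1)) hx.le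
  rw [one_add_div hx.ne', div_mul_eq_mul_div, le_div_iff₀ hx]
  linarith

theorem besselI_le_exp_mul_besselI_add (hx : 0 < x) (n k : ℕ) :
    besselI n x ≤ exp (2 * k * (n + k) / x) * besselI (n + k) x := by
  induction k with
  | zero => simp
  | succ k ih =>
    have hstep : besselI (n + k) x ≤
        exp (2 * (n + (k + 1)) / x) * besselI (n + (k + 1)) x := by
      refine (besselI_le_mul_besselI_succ hx (n + k)).trans
        (mul_le_mul_of_nonneg_right ?_ (besselI_nonneg hx.le _))
      rw [add_comm, Nat.cast_add, add_assoc]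
      exact add_one_le_exp _
    calc besselI n x
        ≤ exp (2 * k * (n + k) / x) * besselI (n + k) x := ih
      _ ≤ exp (2 * k * (n + (k + 1)) / x) * besselI (n + k) x := by
          refine mul_le_mul_of_nonneg_right ?_ (besselI_nonneg hx.le _)
          gcongr
          linarith
      _ ≤ exp (2 * k * (n + (k + 1)) / x) *
            (exp (2 * (n + (k + 1)) / x) * besselI (n + (k + 1)) x) := by gcongr
      _ = exp (2 * (k + 1 : ℕ) * (n + (k + 1 : ℕ)) / x) * besselI (n + (k + 1)) x := by
          rw [← mul_assoc, ← exp_add]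
          congr 2
          push_cast
          ring

lemma succ_mul_besselI_add_le_besselITail (hx : 0 ≤ x) (n k : ℕ) :
    (k + 1) * besselI (n + k) x ≤ besselITail n x :=
  calc (k + 1) * besselI (n + k) x
      = ∑ _i ∈ Finset.range (k + 1), besselI (n + k) x := by simp
    _ ≤ ∑ i ∈ Finset.range (k + 1), besselI (n + i) x := by
        refine Finset.sum_le_sum fun i hi ↦ besselI_antitone hx ?_
        have := Finset.mem_range.mp hi
        omega
    _ ≤ besselITail n x :=
        (summable_besselI_add n x).sum_le_tsum _ fun i _ ↦ besselI_nonneg hx (n + i)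

theorem exp_neg_four_mul_max_mul_besselI_le_besselITail {n : ℕ} (hx : 0 < x) (hn : 0 < n)
    (hxn : x ≤ (n : ℝ) ^ 2) :
    exp (-4) * max (x / n) 1 * besselI n x ≤ besselITail n x := by
  have hn' : (0 : ℝ) < n := by exact_mod_cast hn
  -- `k ≈ x / n` is the scale on which `I_n, I_{n+1}, …` stays comparable to `I_n`.
  set k := ⌊x / n⌋₊
  have hk : k * n ≤ x := (le_div_iff₀ hn').mp (Nat.floor_le (by positivity))
  have hkn : (k : ℝ) ≤ n := by nlinarith
  have hmax : max (x / n) 1 ≤ (k + 1 : ℝ) :=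
    max_le (Nat.lt_floor_add_one _).le (by simp)
  have hexponent : 2 * (k : ℝ) * (n + k) / x ≤ 4 := by
    rw [div_le_iff₀ hx]
    have := mul_le_mul_of_nonneg_left hkn (Nat.cast_nonneg (α := ℝ) k)
    linarith
  have hcomparable : exp (-4) * besselI n x ≤ besselI (n + k) x := by
    rw [exp_neg, inv_mul_le_iff₀ (exp_pos 4)]
    refine (besselI_le_exp_mul_besselI_add hx n k).trans ?_
    exact mul_le_mul_of_nonneg_right (exp_le_exp.mpr hexponent) (besselI_nonneg hx.le _)
  calc exp (-4) * max (x / n) 1 * besselI n x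
      = max (x / n) 1 * (exp (-4) * besselI n x) := by ring
    _ ≤ (k + 1) * besselI (n + k) x :=
        mul_le_mul hmax hcomparable (mul_nonneg (exp_pos _).le (besselI_nonneg hx.le n))
          (by positivity)
    _ ≤ besselITail n x := succ_mul_besselI_add_le_besselITail hx.le n k

end TailVersusPoint

section TailRate

variable {s r : ℝ}

lemma tailRate_of_le (hs : 0 < s) (h : r ≤ s) : tailRate s r = r ^ 2 / s := by
  have hle : r / s ≤ 1 := (div_le_one hs).mpr h
  rw [tailRate, min_eq_left hle, max_eq_right (hle.trans (one_le_exp zero_le_one)), log_exp]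
  ring

lemma tailRate_of_ge (hs : 0 < s) (h : s ≤ r) :
    tailRate s r = r * log (max (r / s) (exp 1)) := by
  rw [tailRate, min_eq_right ((one_le_div hs).mpr h), mul_one]

lemma one_le_log_max_exp_one (a : ℝ) : 1 ≤ log (max a (exp 1)) :=
  (le_log_iff_exp_le (lt_max_of_lt_right (exp_pos 1))).mpr (le_max_right a _)

lemma tailRate_nonneg (hs : 0 ≤ s) (hr : 0 ≤ r) : 0 ≤ tailRate s r := by
  have := one_le_log_max_exp_one (r / s)
  unfold tailRate
  positivity

end TailRate

section TailProbability

variable {x : ℝ}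

lemma exp_mul_besselITail_le {l : ℝ} (hx : 0 ≤ x) (hl : 0 ≤ l) (n : ℕ) :
    exp (l * n) * besselITail n x ≤ exp (x * cosh l) := by
  have hmgf := hasSum_exp_mul_besselI l x
  rw [besselITail, ← tsum_mul_left, ← hmgf.tsum_eq]
  refine ((summable_besselI_add n x).mul_left _).tsum_le_tsum_of_inj
    (fun k : ℕ ↦ ((n + k : ℕ) : ℤ)) (fun a b h ↦ by simpa using h)
    (fun m _ ↦ mul_nonneg (exp_pos _).le (besselI_nonneg hx _)) (fun k ↦ ?_) hmgf.summable
  rw [Int.natAbs_natCast, Int.cast_natCast]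
  refine mul_le_mul_of_nonneg_right ?_ (besselI_nonneg hx (n + k))
  gcongr
  exact n.le_add_right k

theorem mul_sub_cosh_le_sub_log_besselITail {l : ℝ} (hx : 0 < x) (hl : 0 ≤ l) (n : ℕ) :
    l * n - x * (cosh l - 1) ≤ x - log (besselITail n x) := by
  have htail := besselITail_pos hx n
  have hlog := log_le_log (by positivity) (exp_mul_besselITail_le hx.le hl n)
  rw [log_exp, log_mul (exp_ne_zero _) htail.ne', log_exp] at hlog
  linarith

lemma cosh_sub_one_le_sq {l : ℝ} (hl : |l| ≤ 1) : cosh l - 1 ≤ l ^ 2 := by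
  have hsq : l ^ 2 ≤ 1 := (sq_le_one_iff_abs_le_one l).mpr hl
  have habs : |l ^ 2 / 2| = l ^ 2 / 2 := abs_of_nonneg (by positivity)
  have hexp := abs_exp_sub_one_le (x := l ^ 2 / 2) (by rw [habs]; linarith)
  rw [habs] at hexp
  linarith [cosh_le_exp_half_sq l, le_abs_self (exp (l ^ 2 / 2) - 1)]

lemma sq_div_le_sub_log_besselITail {n : ℕ} (hx : 0 < x) (hnx : n ≤ x) :
    1 / 4 * ((n : ℝ) ^ 2 / x) ≤ x - log (besselITail n x) := by
  have hl : 0 ≤ n / (2 * x) := by positivity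
  have hl_abs : |n / (2 * x)| ≤ 1 := by
    rw [abs_of_nonneg hl, div_le_one (by positivity)]
    linarith
  calc 1 / 4 * ((n : ℝ) ^ 2 / x)
      = n / (2 * x) * n - x * (n / (2 * x)) ^ 2 := by field_simp; ring
    _ ≤ n / (2 * x) * n - x * (cosh (n / (2 * x)) - 1) := by
        gcongr
        exact cosh_sub_one_le_sq hl_abs
    _ ≤ x - log (besselITail n x) := mul_sub_cosh_le_sub_log_besselITail hx hl n

lemma mul_cosh_log_max_sub_one_le {r : ℝ} (hx : 0 < x) (hxr : x ≤ r) :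
    x * (cosh (log (max (r / x) (exp 1))) - 1) ≤ 3 / 4 * r := by
  have hr : 0 < r := hx.trans_le hxr
  rcases le_total (r / x) (exp 1) with h | h
  · have hcosh : cosh 1 - 1 ≤ 3 / 4 := by
      have hinv : exp (-1) ≤ 1 / 2 := by
        rw [exp_neg, ← one_div]
        exact one_div_le_one_div_of_le two_pos (by linarith [exp_one_gt_d9])
      rw [cosh_eq]
      linarith [exp_one_lt_d9]
    rw [max_eq_right h, log_exp]
    nlinarith
  · have hexpand : x * ((r / x + (r / x)⁻¹) / 2 - 1) = r / 2 + x * (x / r / 2 - 1) := by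
      field_simp
      ring
    have hratio : x / r ≤ 1 := (div_le_one hr).mpr hxr
    rw [max_eq_left h, cosh_log (by positivity), hexpand]
    nlinarith

lemma mul_log_max_le_sub_log_besselITail {n : ℕ} (hx : 0 < x) (hxn : x ≤ n) :
    1 / 4 * (n * log (max (n / x) (exp 1))) ≤ x - log (besselITail n x) := by
  have hlog := one_le_log_max_exp_one (n / x)
  have hchernoff := mul_sub_cosh_le_sub_log_besselITail hx (zero_le_one.trans hlog) n
  have hcosh := mul_cosh_log_max_sub_one_le hx hxn
  have hn : (n : ℝ) ≤ n * log (max (n / x) (exp 1)) :=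
    le_mul_of_one_le_right n.cast_nonneg hlog
  linarith

theorem tailRate_le_sub_log_besselITail (hx : 0 < x) (n : ℕ) :
    1 / 4 * tailRate x n ≤ x - log (besselITail n x) := by
  rcases le_total (n : ℝ) x with h | h
  · rw [tailRate_of_le hx h]
    exact sq_div_le_sub_log_besselITail hx h
  · rw [tailRate_of_ge hx h]
    exact mul_log_max_le_sub_log_besselITail hx h

lemma exp_le_mul_besselI_zero (hx : 0 ≤ x) (n : ℕ) :
    exp x ≤ (2 * n + 1 + 2 * (x / (n + 1))) * besselI 0 x := by
  have hsplit : besselITail 0 x = ∑ i ∈ Finset.range n, besselI i x + besselITail n x := by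
    simpa [besselITail, add_comm] using
      ((summable_besselI_add 0 x).sum_add_tsum_nat_add n).symm
  have hhead : ∑ i ∈ Finset.range n, besselI i x ≤ n * besselI 0 x := by
    simpa using Finset.sum_le_card_nsmul (Finset.range n) (besselI · x) (besselI 0 x)
      fun i _ ↦ besselI_antitone hx i.zero_le
  have htail : besselITail n x ≤ (1 + x / (n + 1)) * besselI 0 x :=
    (besselITail_le_mul_besselI hx n).trans <|
      mul_le_mul_of_nonneg_left (besselI_antitone hx n.zero_le) (by positivity)
  linarith [two_mul_besselITail_zero x]

lemma exp_le_exp_mul_besselITail {n : ℕ} (hx : 0 < x) (hn : 0 < n)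
    (hxn : x ≤ (n : ℝ) ^ 2) : exp x ≤ exp (10 * ((n : ℝ) ^ 2 / x)) * besselITail n x := by
  have hn' : (1 : ℝ) ≤ n := by exact_mod_cast hn
  have hzero : exp x ≤ 5 * n * besselI 0 x := by
    refine (exp_le_mul_besselI_zero hx.le n).trans
      (mul_le_mul_of_nonneg_right ?_ (besselI_nonneg hx.le 0))
    have : x / (n + 1) ≤ n := by
      rw [div_le_iff₀ (by positivity)]
      nlinarith
    linarith
  have hharnack : besselI 0 x ≤ exp (8 * ((n : ℝ) ^ 2 / x)) * besselI (n + n) x := by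
    convert besselI_le_exp_mul_besselI_add hx 0 (n + n) using 3
    · push_cast
      ring
    · simp
  have htail : n * besselI (n + n) x ≤ besselITail n x := by
    have := succ_mul_besselI_add_le_besselITail hx.le n n
    linarith [besselI_nonneg hx.le (n + n)]
  have hfive : 5 ≤ exp (2 * ((n : ℝ) ^ 2 / x)) := by
    have hratio : 1 ≤ (n : ℝ) ^ 2 / x := (one_le_div hx).mpr hxn
    calc (5 : ℝ) = 1 + 2 + 2 ^ 2 / 2 := by norm_num
      _ ≤ exp 2 := quadratic_le_exp_of_nonneg zero_le_two
      _ ≤ exp (2 * ((n : ℝ) ^ 2 / x)) := exp_le_exp.mpr (by linarith)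
  have hmass : 0 ≤ n * besselI (n + n) x := mul_nonneg n.cast_nonneg (besselI_nonneg hx.le _)
  calc exp x ≤ 5 * n * besselI 0 x := hzero
    _ ≤ 5 * n * (exp (8 * ((n : ℝ) ^ 2 / x)) * besselI (n + n) x) := by gcongr
    _ = 5 * exp (8 * ((n : ℝ) ^ 2 / x)) * (n * besselI (n + n) x) := by ring
    _ ≤ exp (2 * ((n : ℝ) ^ 2 / x)) * exp (8 * ((n : ℝ) ^ 2 / x)) * besselITail n x := by
        gcongr
    _ = exp (10 * ((n : ℝ) ^ 2 / x)) * besselITail n x := by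
        rw [← exp_add]
        ring_nf

lemma sub_log_besselITail_le_sq_div {n : ℕ} (hx : 0 < x) (hn : 0 < n)
    (hxn : x ≤ (n : ℝ) ^ 2) : x - log (besselITail n x) ≤ 10 * ((n : ℝ) ^ 2 / x) := by
  have htail := besselITail_pos hx n
  have hlog := log_le_log (exp_pos x) (exp_le_exp_mul_besselITail hx hn hxn)
  rw [log_exp, log_mul (exp_ne_zero _) htail.ne', log_exp] at hlog
  linarith

lemma div_two_mul_pow_le_besselITail (hx : 0 ≤ x) (n : ℕ) :
    (x / (2 * n)) ^ n ≤ besselITail n x :=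
  calc (x / (2 * n)) ^ n = (x / 2) ^ n / (n : ℝ) ^ n := by rw [← div_div, div_pow]
    _ ≤ (x / 2) ^ n / n ! := by
        gcongr
        exact_mod_cast n.factorial_le_pow
    _ ≤ besselI n x := half_pow_div_factorial_le_besselI hx n
    _ ≤ besselITail n x := besselI_le_besselITail hx n

lemma sub_log_besselITail_le_mul_log_max {n : ℕ} (hx : 0 < x) (hxn : x ≤ n) :
    x - log (besselITail n x) ≤ 10 * (n * log (max (n / x) (exp 1))) := by
  have hn : (0 : ℝ) < n := hx.trans_le hxn
  have hlog := log_le_log (by positivity) (div_two_mul_pow_le_besselITail hx.le n)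
  have hinv : x / (2 * n) = (2 * (n / x))⁻¹ := by field_simp
  rw [log_pow, hinv, log_inv, log_mul two_ne_zero (by positivity)] at hlog
  have hmax : log (n / x) ≤ log (max (n / x) (exp 1)) :=
    log_le_log (by positivity) (le_max_left _ _)
  have hone := one_le_log_max_exp_one (n / x)
  have htwo : log 2 ≤ 1 := by linarith [log_two_lt_d9]
  calc x - log (besselITail n x)
      ≤ n * (1 + log 2 + log (n / x)) := by linarith
    _ ≤ n * (10 * log (max (n / x) (exp 1))) := by gcongr; linarith
    _ = 10 * (n * log (max (n / x) (exp 1))) := by ring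

theorem sub_log_besselITail_le_tailRate {n : ℕ} (hx : 0 < x) (hn : 0 < n)
    (hxn : x ≤ (n : ℝ) ^ 2) : x - log (besselITail n x) ≤ 10 * tailRate x n := by
  rcases le_total (n : ℝ) x with h | h
  · rw [tailRate_of_le hx h]
    exact sub_log_besselITail_le_sq_div hx hn hxn
  · rw [tailRate_of_ge hx h]
    exact sub_log_besselITail_le_mul_log_max hx h

end TailProbability

section RandomWalk

lemma tsum_srw_eq_exp_neg_mul_besselI (s : ℝ) (n : ℕ) :
    ∑' j : ℕ, exp (-s) * s ^ (n + 2 * j) / (n + 2 * j)! * ((n + 2 * j).choose j : ℝ) *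
      (2 : ℝ)⁻¹ ^ (n + 2 * j) = exp (-s) * besselI n s := by
  rw [besselI, ← tsum_mul_left]
  refine tsum_congr fun j ↦ ?_
  have hchoose : ((n + 2 * j).choose j : ℝ) = (n + 2 * j)! / (j ! * (n + j)!) := by
    rw [show n + 2 * j = j + (n + j) by ring]
    exact Nat.cast_add_choose ℝ
  rw [hchoose, besselITerm, div_eq_mul_inv s 2, mul_pow]
  field_simp

lemma tsum_int_ge_natAbs (f : ℕ → ℝ) (n : ℕ) :
    ∑' x : {x : ℤ // (n : ℤ) ≤ x}, f x.1.natAbs = ∑' k, f (n + k) := by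
  let e : ℕ ≃ {x : ℤ // (n : ℤ) ≤ x} :=
    { toFun := fun k ↦ ⟨n + k, by omega⟩
      invFun := fun x ↦ (x.1 - n).toNat
      left_inv := fun k ↦ by simp
      right_inv := fun x ↦ Subtype.ext (by have := x.2; dsimp only; omega) }
  exact (e.tsum_eq _).symm

lemma tsum_int_ge_exp_neg_mul_besselI (s : ℝ) (n : ℕ) :
    ∑' x : {x : ℤ // (n : ℤ) ≤ x}, exp (-s) * besselI x.1.natAbs s =
      exp (-s) * besselITail n s := by
  rw [tsum_mul_left, tsum_int_ge_natAbs (besselI · s), besselITail]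

lemma neg_log_exp_neg_mul {a : ℝ} (ha : a ≠ 0) (s : ℝ) : -log (exp (-s) * a) = s - log a := by
  rw [log_mul (exp_ne_zero _) ha, log_exp]
  ring

end RandomWalk

/-- Two-sided bounds on the upper tail of the continuous-time simple random
walk on `ℤ`, and on its tail-to-point ratio: with
`q_s(x) = ∑_j e^{-s} s^{|x|+2j}/(|x|+2j)! · C(|x|+2j, j) · 2^{-(|x|+2j)}`
the time-`s` distribution of the rate-1 SRW started at 0, there are constants
`c, C > 0` such that uniformly in `s > 0` and integers `r ≥ √s`,
`-log P(X_s ≥ r) ≍ r·min(r/s,1)·log(max(r/s,e))` and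
`P(X_s ≥ r)/P(X_s = r) ≍ max(s/r, 1)`. -/
theorem srw_upper_tail_bounds : ∃ c C : ℝ, 0 < c ∧ 0 < C ∧
    ∀ (s : ℝ) (r : ℤ), 0 < s → Real.sqrt s ≤ (r : ℝ) →
    let q : ℤ → ℝ := fun x => ∑' j : ℕ,
      Real.exp (-s) * s ^ (x.natAbs + 2*j) / (Nat.factorial (x.natAbs + 2*j) : ℝ) *
        (Nat.choose (x.natAbs + 2*j) j : ℝ) * (2:ℝ)⁻¹ ^ (x.natAbs + 2*j)
    (c * (r:ℝ) * min ((r:ℝ)/s) 1 * Real.log (max ((r:ℝ)/s) (Real.exp 1)) ≤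
        -Real.log (∑' x : {x : ℤ // r ≤ x}, q x.1) ∧
      -Real.log (∑' x : {x : ℤ // r ≤ x}, q x.1) ≤
        C * (r:ℝ) * min ((r:ℝ)/s) 1 * Real.log (max ((r:ℝ)/s) (Real.exp 1))) ∧
    (c * max (s/(r:ℝ)) 1 ≤ (∑' x : {x : ℤ // r ≤ x}, q x.1) / q r ∧
      (∑' x : {x : ℤ // r ≤ x}, q x.1) / q r ≤ C * max (s/(r:ℝ)) 1) := by
  refine ⟨exp (-4), 10, exp_pos _, by norm_num, ?_⟩
  intro s r hs hsr q
  have hr : (0 : ℝ) < r := (sqrt_pos.mpr hs).trans_le hsr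
  obtain ⟨n, rfl⟩ := Int.eq_ofNat_of_zero_le (Int.cast_pos.mp hr).le
  rw [Int.cast_natCast] at *
  have hn : 0 < n := Nat.cast_pos.mp hr
  have hsn : s ≤ (n : ℝ) ^ 2 := (sqrt_le_left hr.le).mp hsr
  have hq (x : ℤ) : q x = exp (-s) * besselI x.natAbs s :=
    tsum_srw_eq_exp_neg_mul_besselI s x.natAbs
  have hrate (a : ℝ) : a * n * min (n / s) 1 * log (max (n / s) (exp 1)) = a * tailRate s n := by
    rw [tailRate]
    ring
  simp only [hq, tsum_int_ge_exp_neg_mul_besselI, neg_log_exp_neg_mul (besselITail_pos hs n).ne',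
    hrate, mul_div_mul_left _ _ (exp_ne_zero (-s)), Int.natAbs_natCast,
    le_div_iff₀ (besselI_pos hs n), div_le_iff₀ (besselI_pos hs n)]
  refine ⟨⟨?_, sub_log_besselITail_le_tailRate hs hn hsn⟩,
    exp_neg_four_mul_max_mul_besselI_le_besselITail hs hn hsn, ?_⟩
  · have hc : exp (-4) ≤ 1 / 4 := by
      rw [exp_neg, ← one_div]
      exact one_div_le_one_div_of_le four_pos (by linarith [add_one_le_exp (4 : ℝ)])
    exact (mul_le_mul_of_nonneg_right hc (tailRate_nonneg hs.le hr.le)).trans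
      (tailRate_le_sub_log_besselITail hs n)
  · refine (besselITail_le_max_mul_besselI hs.le hn).trans ?_
    have := besselI_nonneg hs.le n
    gcongr
    norm_num
end

section
/- For s > 0 let p_s : ℕ → ℝ be the Poisson probability mass function p_s(x) = e^{−s}·s^x/x!, let H(s) = −Σ_{x=0}^∞ p_s(x)·log p_s(x), and let V(s) = Σ_{x=0}^∞ p_s(x)·( −log p_s(x) − H(s) )² be the variance of the information −log p_s(X_s) for X_s Poisson with mean s. There exist constants C > 0 and s₀ ≥ e such that for all s ≥ s₀, |V(s) − 1/2| ≤ C·s^{−1/4}·log s. -/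
open Real

/-! Write `-log p_s(n) = (n - s)² / (2 s) + f n`, up to the normalization of the Gaussian density.
The quadratic part has variance exactly `1 / 2 + 1 / (4 s)`, so by the Cauchy–Schwarz inequality it
suffices to see that `Var f = O(1 / s)`. This follows from the Poincaré inequality
`Var f ≤ s E[(f (X + 1) - f X)²]` for the Poisson law, since
`f (n + 1) - f n = log u - (u - 1) + 1 / (2 s)` with `u = (n + 1) / s`.

For the Poincaré inequality, bound `(f n - f m)² ≤ (n - m) ∑_{m ≤ k < n} (f (k + 1) - f k)²` in
`Var f = E[(f X - f Y)²; Y < X]`, where `X` and `Y` are independent: the Stein identity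
`E[X h(X)] = s E[h(X + 1)]` gives `E[X - Y; Y ≤ k < X] = s p_s(k)`. -/

section

open MeasureTheory ProbabilityTheory Set
open scoped ENNReal NNReal Nat

theorem abs_covariance_le_sqrt_mul_sqrt {Ω : Type*} {mΩ : MeasurableSpace Ω} {μ : Measure Ω}
    [IsFiniteMeasure μ] {X Y : Ω → ℝ} (hX : MemLp X 2 μ) (hY : MemLp Y 2 μ) :
    |cov[X, Y; μ]| ≤ √Var[X; μ] * √Var[Y; μ] := by
  have hquad (t : ℝ) : 0 ≤ Var[X; μ] * (t * t) + 2 * cov[X, Y; μ] * t + Var[Y; μ] := by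
    have h := variance_nonneg (t • X + Y) μ
    rw [variance_add (hX.const_smul t) hY, variance_smul, covariance_smul_left] at h
    linarith
  have hdiscrim := discrim_le_zero hquad
  rw [discrim] at hdiscrim
  rw [← sqrt_mul (variance_nonneg X μ)]
  exact abs_le_sqrt (by linarith)

theorem abs_variance_add_sub_variance_le {Ω : Type*} {mΩ : MeasurableSpace Ω} {μ : Measure Ω}
    [IsFiniteMeasure μ] {X Y : Ω → ℝ} (hX : MemLp X 2 μ) (hY : MemLp Y 2 μ) :
    |Var[X + Y; μ] - Var[X; μ]| ≤ 2 * (√Var[X; μ] * √Var[Y; μ]) + Var[Y; μ] := by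
  calc |Var[X + Y; μ] - Var[X; μ]| = |2 * cov[X, Y; μ] + Var[Y; μ]| := by
        rw [variance_add hX hY, add_assoc, add_sub_cancel_left]
    _ ≤ |2 * cov[X, Y; μ]| + |Var[Y; μ]| := abs_add_le _ _
    _ = 2 * |cov[X, Y; μ]| + Var[Y; μ] := by
        rw [abs_mul, abs_two, abs_of_nonneg (variance_nonneg Y μ)]
    _ ≤ 2 * (√Var[X; μ] * √Var[Y; μ]) + Var[Y; μ] := by
        gcongr
        exact abs_covariance_le_sqrt_mul_sqrt hX hY

theorem two_mul_evariance_eq_lintegral_prod {Ω : Type*} {mΩ : MeasurableSpace Ω} {μ : Measure Ω}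
    [IsProbabilityMeasure μ] {X : Ω → ℝ} (hX : AEStronglyMeasurable X μ) :
    2 * eVar[X; μ] = ∫⁻ z, ENNReal.ofReal ((X z.1 - X z.2) ^ 2) ∂μ.prod μ := by
  by_cases hX2 : MemLp X 2 μ
  · have hsub : MemLp (fun z : Ω × Ω ↦ X z.1 + (-X) z.2) 2 (μ.prod μ) :=
      (hX2.comp_fst μ).add (hX2.neg.comp_snd μ)
    have hmean : ∫ z, X z.1 + (-X) z.2 ∂μ.prod μ = 0 := by
      have hint := hX2.integrable one_le_two
      rw [integral_add (hint.comp_fst μ) (hint.neg.comp_snd μ), integral_fun_fst,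
        integral_fun_snd]
      simp [integral_neg]
    calc 2 * eVar[X; μ] = eVar[fun z : Ω × Ω ↦ X z.1 + (-X) z.2; μ.prod μ] := by
          rw [← ofReal_variance hsub, variance_add_prod hX2 hX2.neg, variance_neg, ← two_mul,
            ENNReal.ofReal_mul zero_le_two, ofReal_variance hX2, ENNReal.ofReal_ofNat]
      _ = ∫⁻ z, ENNReal.ofReal ((X z.1 - X z.2) ^ 2) ∂μ.prod μ := by
          rw [evariance_eq_lintegral_ofReal, hmean]
          simp only [sub_zero, Pi.neg_apply, ← sub_eq_add_neg]
  · have hinner (x : Ω) : ∫⁻ y, ENNReal.ofReal ((X x - X y) ^ 2) ∂μ = ∞ := by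
      by_contra hfin
      have hsub : AEStronglyMeasurable (fun y ↦ X x - X y) μ := aestronglyMeasurable_const.sub hX
      have : MemLp (fun y ↦ X x - X y) 2 μ := by
        rw [memLp_two_iff_integrable_sq hsub]
        exact ⟨by fun_prop, (hasFiniteIntegral_iff_ofReal (.of_forall fun _ ↦ sq_nonneg _)).2
          (lt_top_iff_ne_top.2 hfin)⟩
      exact hX2 (((memLp_const (X x)).sub this).congr_norm hX (by simp))
    rw [evariance_eq_top hX hX2, lintegral_prod _ (by fun_prop)]
    simp [hinner]

theorem mul_log_sub_sub_one_sq_le {u : ℝ} (hu : 0 < u) :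
    u * (log u - (u - 1)) ^ 2 ≤ 4 * (u - 1) ^ 4 := by
  -- In terms of `v = √u` the error `|log v - (v - 1)| ≤ (v - 1) ^ 2 / v` is less singular at `0`.
  obtain ⟨v, hv, rfl⟩ : ∃ v : ℝ, 0 < v ∧ u = v ^ 2 := ⟨√u, sqrt_pos.2 hu, (sq_sqrt hu.le).symm⟩
  have hupper : v * (log v - (v - 1)) ≤ 0 :=
    mul_nonpos_of_nonneg_of_nonpos hv.le (sub_nonpos.2 (log_le_sub_one_of_pos hv))
  have hlower : -(v - 1) ^ 2 ≤ v * (log v - (v - 1)) := by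
    calc -(v - 1) ^ 2 = v * (1 - v⁻¹ - (v - 1)) := by field_simp; ring
      _ ≤ v * (log v - (v - 1)) := by gcongr; exact one_sub_inv_le_log_of_pos hv
  have hlog : v * (log (v ^ 2) - (v ^ 2 - 1)) =
      2 * (v * (log v - (v - 1))) - v * (v - 1) ^ 2 := by
    rw [log_pow]
    push_cast
    ring
  have habs : |v * (log (v ^ 2) - (v ^ 2 - 1))| ≤ 2 * (v ^ 2 - 1) ^ 2 := by
    calc |v * (log (v ^ 2) - (v ^ 2 - 1))| ≤ (2 + v) * (v - 1) ^ 2 := by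
          rw [hlog, abs_of_nonpos (by linarith [mul_nonneg hv.le (sq_nonneg (v - 1))])]
          linarith
      _ ≤ 2 * (v + 1) ^ 2 * (v - 1) ^ 2 := by gcongr; nlinarith
      _ = 2 * (v ^ 2 - 1) ^ 2 := by ring
  calc v ^ 2 * (log (v ^ 2) - (v ^ 2 - 1)) ^ 2 = |v * (log (v ^ 2) - (v ^ 2 - 1))| ^ 2 := by
        rw [sq_abs, mul_pow]
    _ ≤ (2 * (v ^ 2 - 1) ^ 2) ^ 2 := by gcongr
    _ = 4 * (v ^ 2 - 1) ^ 4 := by ring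

theorem one_div_sqrt_le_rpow_mul_log {s : ℝ} (hs : exp 1 ≤ s) :
    1 / √s ≤ s ^ (-(1 / 4 : ℝ)) * log s := by
  have hs1 : 1 ≤ s := (one_le_exp zero_le_one).trans hs
  have hs0 : 0 < s := by positivity
  calc 1 / √s = s ^ (-(1 / 2 : ℝ)) * 1 := by rw [sqrt_eq_rpow, rpow_neg hs0.le, mul_one, one_div]
    _ ≤ s ^ (-(1 / 4 : ℝ)) * log s := by
        gcongr
        · norm_num
        · exact (le_log_iff_exp_le hs0).2 hs

theorem withDensity_natCast_poissonMeasure (r : ℝ≥0) :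
    Po(r).withDensity (fun n ↦ ((n : ℝ≥0) : ℝ≥0∞)) = r • Po(r).map Nat.succ := by
  refine Measure.ext_of_singleton fun n ↦ ?_
  rw [withDensity_apply _ (measurableSet_singleton n), lintegral_singleton,
    Measure.smul_apply, Measure.map_apply .of_discrete (measurableSet_singleton n)]
  cases n with
  | zero => simp [preimage]
  | succ n =>
    have hpre : Nat.succ ⁻¹' {n + 1} = {n} := by ext; simp
    rw [hpre, poissonMeasure_singleton, poissonMeasure_singleton, ENNReal.smul_def, smul_eq_mul,
      ← ENNReal.ofReal_coe_nnreal, ← ENNReal.ofReal_coe_nnreal,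
      ← ENNReal.ofReal_mul (by positivity), ← ENNReal.ofReal_mul (by positivity),
      Nat.factorial_succ]
    congr 1
    push_cast
    field_simp
    ring

theorem lintegral_natCast_mul_poissonMeasure (r : ℝ≥0) (f : ℕ → ℝ≥0∞) :
    ∫⁻ n, n * f n ∂Po(r) = r * ∫⁻ n, f (n + 1) ∂Po(r) := by
  have h := congrArg (fun μ ↦ ∫⁻ n, f n ∂μ) (withDensity_natCast_poissonMeasure r)
  simp only [lintegral_withDensity_eq_lintegral_mul _ Measurable.of_discrete
    (Measurable.of_discrete (f := f)), lintegral_smul_measure,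
    lintegral_map (Measurable.of_discrete (f := f)) Measurable.of_discrete] at h
  simpa [ENNReal.smul_def] using h

theorem integral_natCast_mul_poissonMeasure (r : ℝ≥0) (f : ℕ → ℝ) :
    ∫ n, n * f n ∂Po(r) = r * ∫ n, f (n + 1) ∂Po(r) := by
  have h := congrArg (fun μ ↦ ∫ n, f n ∂μ) (withDensity_natCast_poissonMeasure r)
  simp only [integral_withDensity_eq_integral_smul
      (Measurable.of_discrete (f := fun n : ℕ ↦ (n : ℝ≥0))) f, integral_smul_nnreal_measure,
    integral_map Measurable.of_discrete.aemeasurable (AEStronglyMeasurable.of_discrete (f := f))]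
    at h
  simpa [NNReal.smul_def] using h

theorem integrable_exp_poissonMeasure (r : ℝ≥0) : Integrable (fun n : ℕ ↦ rexp n) Po(r) := by
  rw [integrable_poissonMeasure_iff]
  refine ((Real.summable_pow_div_factorial (r * rexp 1)).mul_left (rexp (-r))).congr fun n ↦ ?_
  rw [norm_of_nonneg (exp_pos _).le, mul_pow, ← exp_nat_mul, mul_one]
  ring

theorem integrable_natCast_sub_pow_poissonMeasure (r : ℝ≥0) (c : ℝ) (k : ℕ) :
    Integrable (fun n : ℕ ↦ ((n : ℝ) - c) ^ k) Po(r) := by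
  refine ((integrable_exp_poissonMeasure r).const_mul (k ! * rexp |c|)).mono' .of_discrete
    (.of_forall fun n ↦ ?_)
  calc ‖((n : ℝ) - c) ^ k‖ ≤ (n + |c|) ^ k := by
        rw [norm_pow]
        gcongr
        simpa using norm_sub_le (n : ℝ) c
    _ ≤ k ! * rexp (n + |c|) := by
        rw [← div_le_iff₀' (by positivity)]
        exact pow_div_factorial_le_exp _ (by positivity) k
    _ = k ! * rexp |c| * rexp n := by rw [exp_add]; ring

theorem integral_natCast_sub_pow_succ_poissonMeasure (r : ℝ≥0) (k : ℕ) :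
    ∫ n : ℕ, ((n : ℝ) - r) ^ (k + 1) ∂Po(r) =
      r * ∑ i ∈ Finset.range k, k.choose i * ∫ n : ℕ, ((n : ℝ) - r) ^ i ∂Po(r) := by
  have hint (i : ℕ) := integrable_natCast_sub_pow_poissonMeasure r r i
  have hshift : Integrable (fun n : ℕ ↦ ((n + 1 : ℕ) - r : ℝ) ^ k) Po(r) := by
    convert integrable_natCast_sub_pow_poissonMeasure r (r - 1) k using 3
    push_cast
    ring
  have hmul : Integrable (fun n : ℕ ↦ (n : ℝ) * (n - r) ^ k) Po(r) := by
    refine ((hint (k + 1)).add ((hint k).const_mul (r : ℝ))).congr (.of_forall fun n ↦ ?_)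
    simp only [Pi.add_apply]
    ring
  calc ∫ n : ℕ, ((n : ℝ) - r) ^ (k + 1) ∂Po(r)
      = ∫ n : ℕ, ((n : ℝ) * (n - r) ^ k - r * (n - r) ^ k) ∂Po(r) := by
        congr with n; ring
    _ = r * ∫ n : ℕ, (((n + 1 : ℕ) - r : ℝ) ^ k - (n - r) ^ k) ∂Po(r) := by
        rw [integral_sub hmul ((hint k).const_mul _), integral_const_mul,
          integral_natCast_mul_poissonMeasure r fun n ↦ ((n : ℝ) - r) ^ k,
          integral_sub hshift (hint k), mul_sub]
    _ = r * ∫ n : ℕ, ∑ i ∈ Finset.range k, k.choose i * ((n : ℝ) - r) ^ i ∂Po(r) := by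
        congr with n
        have : ((n + 1 : ℕ) - r : ℝ) = (n - r) + 1 := by push_cast; ring
        rw [this, add_pow, Finset.sum_range_succ]
        simp [mul_comm]
    _ = _ := by
        rw [integral_finsetSum _ fun i _ ↦ (hint i).const_mul _]
        simp only [integral_const_mul]

theorem integral_natCast_sub_sq_poissonMeasure (r : ℝ≥0) :
    ∫ n : ℕ, ((n : ℝ) - r) ^ 2 ∂Po(r) = r := by
  simp [integral_natCast_sub_pow_succ_poissonMeasure]

theorem integral_natCast_sub_pow_four_poissonMeasure (r : ℝ≥0) :
    ∫ n : ℕ, ((n : ℝ) - r) ^ 4 ∂Po(r) = 3 * r ^ 2 + r := by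
  simp only [integral_natCast_sub_pow_succ_poissonMeasure, Finset.sum_range_succ,
    Finset.sum_range_zero]
  norm_num [Nat.choose]
  ring

theorem integral_natCast_poissonMeasure (r : ℝ≥0) : ∫ n : ℕ, (n : ℝ) ∂Po(r) = r := by
  simpa using integral_natCast_mul_poissonMeasure r 1

theorem setLIntegral_natCast_poissonMeasure (r : ℝ≥0) (s : Set ℕ) :
    ∫⁻ n in s, (n : ℝ≥0∞) ∂Po(r) = r * Po(r) (Nat.succ ⁻¹' s) := by
  calc ∫⁻ n in s, (n : ℝ≥0∞) ∂Po(r) = ∫⁻ n, n * s.indicator 1 n ∂Po(r) := by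
        rw [← lintegral_indicator .of_discrete]
        congr with n
        by_cases hn : n ∈ s <;> simp [hn]
    _ = r * ∫⁻ n, (Nat.succ ⁻¹' s).indicator 1 n ∂Po(r) :=
        lintegral_natCast_mul_poissonMeasure r _
    _ = r * Po(r) (Nat.succ ⁻¹' s) := by rw [lintegral_indicator_one .of_discrete]

theorem setLIntegral_natCast_Ioi_poissonMeasure (r : ℝ≥0) (k : ℕ) :
    ∫⁻ n in Ioi k, (n : ℝ≥0∞) ∂Po(r) = r * Po(r) (Ici k) := by
  rw [setLIntegral_natCast_poissonMeasure]
  congr 2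
  ext n
  simp

theorem setLIntegral_natCast_Iic_poissonMeasure (r : ℝ≥0) (k : ℕ) :
    ∫⁻ n in Iic k, (n : ℝ≥0∞) ∂Po(r) = r * Po(r) (Iio k) := by
  rw [setLIntegral_natCast_poissonMeasure]
  congr 2

theorem setLIntegral_sub_Ioi_prod_Iic_poissonMeasure (r : ℝ≥0) (k : ℕ) :
    ∫⁻ z in Ioi k ×ˢ Iic k, ((z.1 - z.2 : ℕ) : ℝ≥0∞) ∂Po(r).prod Po(r) = r * Po(r) {k} := by
  have hIci : Po(r) (Ici k) = Po(r) {k} + Po(r) (Ioi k) := by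
    rw [← measure_union (by simp) .of_discrete, singleton_union, Ioi_insert]
  have hIic : Po(r) (Iic k) = Po(r) {k} + Po(r) (Iio k) := by
    rw [← measure_union (by simp) .of_discrete, singleton_union, Iio_insert]
  have htotal : Po(r) (Ioi k) + Po(r) (Iic k) = 1 := by
    rw [← compl_Iic, add_comm, measure_add_measure_compl .of_discrete, measure_univ]
  have hfst : ∫⁻ z in Ioi k ×ˢ Iic k, (z.1 : ℝ≥0∞) ∂Po(r).prod Po(r) =
      r * Po(r) (Ici k) * Po(r) (Iic k) := by
    rw [← Measure.prod_restrict, ← setLIntegral_natCast_Ioi_poissonMeasure]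
    simpa using lintegral_prod_mul (μ := Po(r).restrict (Ioi k)) (ν := Po(r).restrict (Iic k))
      (f := fun n ↦ (n : ℝ≥0∞)) (g := 1) .of_discrete .of_discrete
  have hsnd : ∫⁻ z in Ioi k ×ˢ Iic k, (z.2 : ℝ≥0∞) ∂Po(r).prod Po(r) =
      Po(r) (Ioi k) * (r * Po(r) (Iio k)) := by
    rw [← Measure.prod_restrict, ← setLIntegral_natCast_Iic_poissonMeasure]
    simpa using lintegral_prod_mul (μ := Po(r).restrict (Ioi k)) (ν := Po(r).restrict (Iic k))
      (f := 1) (g := fun n ↦ (n : ℝ≥0∞)) .of_discrete .of_discrete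
  refine (ENNReal.add_left_inj (a := Po(r) (Ioi k) * (r * Po(r) (Iio k))) (by finiteness)).1 ?_
  calc ∫⁻ z in Ioi k ×ˢ Iic k, ((z.1 - z.2 : ℕ) : ℝ≥0∞) ∂Po(r).prod Po(r) +
        Po(r) (Ioi k) * (r * Po(r) (Iio k))
      = ∫⁻ z in Ioi k ×ˢ Iic k, (z.1 : ℝ≥0∞) ∂Po(r).prod Po(r) := by
        rw [← hsnd, ← lintegral_add_left .of_discrete]
        refine setLIntegral_congr_fun .of_discrete fun z hz ↦ ?_
        exact_mod_cast Nat.sub_add_cancel (hz.2.trans hz.1.le)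
    _ = r * Po(r) {k} * (Po(r) (Ioi k) + Po(r) (Iic k)) + Po(r) (Ioi k) * (r * Po(r) (Iio k)) := by
        rw [hfst, hIci, hIic]
        ring
    _ = r * Po(r) {k} + Po(r) (Ioi k) * (r * Po(r) (Iio k)) := by rw [htotal, mul_one]

theorem ofReal_sq_sub_le_tsum_indicator (f : ℕ → ℝ) {m n : ℕ} (hmn : m ≤ n) :
    ENNReal.ofReal ((f n - f m) ^ 2) ≤ ∑' k, (Ioi k ×ˢ Iic k).indicator
      (fun z ↦ ((z.1 - z.2 : ℕ) : ℝ≥0∞) * ENNReal.ofReal ((f (k + 1) - f k) ^ 2)) (n, m) := by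
  calc ENNReal.ofReal ((f n - f m) ^ 2)
      ≤ ENNReal.ofReal ((n - m : ℕ) * ∑ k ∈ Finset.Ico m n, (f (k + 1) - f k) ^ 2) := by
        gcongr
        rw [← Finset.sum_Ico_sub f hmn, ← Nat.card_Ico]
        exact sq_sum_le_card_mul_sum_sq
    _ = ∑ k ∈ Finset.Ico m n, (n - m : ℕ) * ENNReal.ofReal ((f (k + 1) - f k) ^ 2) := by
        rw [ENNReal.ofReal_mul (by positivity), ENNReal.ofReal_natCast,
          ENNReal.ofReal_sum_of_nonneg fun _ _ ↦ sq_nonneg _, Finset.mul_sum]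
    _ = ∑ k ∈ Finset.Ico m n, (Ioi k ×ˢ Iic k).indicator (fun z ↦ ((z.1 - z.2 : ℕ) : ℝ≥0∞) *
          ENNReal.ofReal ((f (k + 1) - f k) ^ 2)) (n, m) := by
        refine Finset.sum_congr rfl fun k hk ↦ ?_
        rw [Finset.mem_Ico] at hk
        have hmem : (n, m) ∈ Ioi k ×ˢ Iic k := ⟨hk.2, hk.1⟩
        rw [indicator_of_mem hmem]
    _ ≤ _ := ENNReal.sum_le_tsum _

theorem evariance_poissonMeasure_le_mul_lintegral_sq_succ_sub (r : ℝ≥0) (f : ℕ → ℝ) :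
    eVar[f; Po(r)] ≤ r * ∫⁻ n, ENNReal.ofReal ((f (n + 1) - f n) ^ 2) ∂Po(r) := by
  set gradSq : ℕ → ℝ≥0∞ := fun k ↦ ENNReal.ofReal ((f (k + 1) - f k) ^ 2)
  set g : ℕ × ℕ → ℝ≥0∞ := fun z ↦ ∑' k, (Ioi k ×ˢ Iic k).indicator
    (fun z ↦ ((z.1 - z.2 : ℕ) : ℝ≥0∞) * gradSq k) z with hg
  have hpointwise (z : ℕ × ℕ) : ENNReal.ofReal ((f z.1 - f z.2) ^ 2) ≤ g z + g z.swap := by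
    rcases le_total z.2 z.1 with h | h
    · exact (ofReal_sq_sub_le_tsum_indicator f h).trans le_self_add
    · rw [sub_sq_comm]
      exact (ofReal_sq_sub_le_tsum_indicator f h).trans le_add_self
  have hintegral : ∫⁻ z, g z ∂Po(r).prod Po(r) = r * ∫⁻ n, gradSq n ∂Po(r) := by
    simp only [hg]
    rw [lintegral_tsum fun _ ↦ .of_discrete, lintegral_countable', ← ENNReal.tsum_mul_left]
    refine tsum_congr fun k ↦ ?_
    rw [lintegral_indicator .of_discrete, lintegral_mul_const _ .of_discrete,
      setLIntegral_sub_Ioi_prod_Iic_poissonMeasure]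
    ring
  refine (ENNReal.mul_le_mul_iff_right two_ne_zero ENNReal.ofNat_ne_top).1 ?_
  calc 2 * eVar[f; Po(r)] = ∫⁻ z, ENNReal.ofReal ((f z.1 - f z.2) ^ 2) ∂Po(r).prod Po(r) :=
        two_mul_evariance_eq_lintegral_prod .of_discrete
    _ ≤ ∫⁻ z, (g z + g z.swap) ∂Po(r).prod Po(r) := lintegral_mono hpointwise
    _ = 2 * (r * ∫⁻ n, gradSq n ∂Po(r)) := by
        rw [lintegral_add_left .of_discrete, lintegral_prod_swap, hintegral, two_mul]

-- `n - 1` is truncated, harmlessly: the weight `n` vanishes at `n = 0`.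
theorem evariance_poissonMeasure_le_lintegral_natCast_mul_sq_sub (r : ℝ≥0) (f : ℕ → ℝ) :
    eVar[f; Po(r)] ≤ ∫⁻ n, n * ENNReal.ofReal ((f n - f (n - 1)) ^ 2) ∂Po(r) := by
  rw [lintegral_natCast_mul_poissonMeasure]
  exact evariance_poissonMeasure_le_mul_lintegral_sq_succ_sub r f

/-- The information `-log μ {x}` carried by the outcome `x` of a discrete law `μ`. -/
noncomputable def information {α : Type*} [MeasurableSpace α] (μ : Measure α) (x : α) : ℝ :=
  -log (μ.real {x})

/-- The information `-log` of the density at `x` of the Gaussian law with mean and variance `r`,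
up to an additive constant. -/
noncomputable def gaussianInformation (r x : ℝ) : ℝ := (x - r) ^ 2 / (2 * r)

theorem information_poissonMeasure_succ_sub {r : ℝ≥0} (hr : 0 < r) (n : ℕ) :
    information Po(r) (n + 1) - information Po(r) n = log ((n + 1 : ℕ) / r) := by
  have hquot : Po(r).real {n} / Po(r).real {n + 1} = (n + 1 : ℕ) / r := by
    have hr' : (r : ℝ) ≠ 0 := by positivity
    rw [poissonMeasure_real_singleton, poissonMeasure_real_singleton, Nat.factorial_succ]
    push_cast
    field_simp
    ring
  rw [← hquot, log_div (poissonMeasure_real_singleton_pos n hr).ne'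
    (poissonMeasure_real_singleton_pos (n + 1) hr).ne', information, information]
  ring

theorem gaussianInformation_add_one_sub {r : ℝ} (hr : r ≠ 0) (x : ℝ) :
    gaussianInformation r (x + 1) - gaussianInformation r x = (x + 1) / r - 1 - 1 / (2 * r) := by
  simp only [gaussianInformation]
  field_simp
  ring

theorem memLp_gaussianInformation_poissonMeasure (r : ℝ≥0) :
    MemLp (fun n : ℕ ↦ gaussianInformation r n) 2 Po(r) := by
  rw [memLp_two_iff_integrable_sq .of_discrete]
  simp only [gaussianInformation, div_pow, ← pow_mul]
  exact (integrable_natCast_sub_pow_poissonMeasure r r 4).div_const _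

theorem variance_gaussianInformation_poissonMeasure {r : ℝ≥0} (hr : r ≠ 0) :
    Var[fun n : ℕ ↦ gaussianInformation r n; Po(r)] = 1 / 2 + 1 / (4 * r) := by
  have hr' : (r : ℝ) ≠ 0 := by exact_mod_cast hr
  rw [variance_eq_sub (memLp_gaussianInformation_poissonMeasure r)]
  simp only [Pi.pow_apply, gaussianInformation, div_pow, ← pow_mul, integral_div,
    integral_natCast_sub_sq_poissonMeasure]
  rw [integral_natCast_sub_pow_four_poissonMeasure]
  field_simp
  ring

/-- The error made when approximating the information of the Poisson law with mean `r` by that of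
the Gaussian law with the same mean and variance. -/
noncomputable def poissonInformationError (r : ℝ≥0) (n : ℕ) : ℝ :=
  information Po(r) n - gaussianInformation r n

theorem poissonInformationError_succ_sub {r : ℝ≥0} (hr : 0 < r) (n : ℕ) :
    poissonInformationError r (n + 1) - poissonInformationError r n =
      log ((n + 1 : ℕ) / r) - ((n + 1 : ℕ) / r - 1) + 1 / (2 * r) := by
  have hgauss := gaussianInformation_add_one_sub (NNReal.coe_ne_zero.2 hr.ne') n
  rw [poissonInformationError, poissonInformationError,
    ← information_poissonMeasure_succ_sub hr]
  push_cast
  linarith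

theorem natCast_mul_sq_poissonInformationError_sub_le {r : ℝ≥0} (hr : 0 < r) (n : ℕ) :
    n * (poissonInformationError r n - poissonInformationError r (n - 1)) ^ 2 ≤
      8 / r ^ 3 * (n - r) ^ 4 + n / (2 * r ^ 2) := by
  cases n with
  | zero => simp only [Nat.cast_zero, zero_mul]; positivity
  | succ n =>
    have hr' : (0 : ℝ) < r := hr
    rw [Nat.add_sub_cancel, poissonInformationError_succ_sub hr]
    obtain ⟨u, hu, hnu⟩ : ∃ u : ℝ, 0 < u ∧ ((n + 1 : ℕ) : ℝ) = r * u :=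
      ⟨(n + 1 : ℕ) / r, by positivity, (mul_div_cancel₀ _ hr'.ne').symm⟩
    rw [hnu, mul_div_cancel_left₀ u hr'.ne']
    calc r * u * (log u - (u - 1) + 1 / (2 * r)) ^ 2
        ≤ r * u * (2 * ((log u - (u - 1)) ^ 2 + (1 / (2 * r)) ^ 2)) := by
          gcongr
          exact add_sq_le
      _ = 2 * r * (u * (log u - (u - 1)) ^ 2) + r * u / (2 * r ^ 2) := by
          field_simp
      _ ≤ 2 * r * (4 * (u - 1) ^ 4) + r * u / (2 * r ^ 2) := by
          gcongr 2 * r * ?_ + _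
          exact mul_log_sub_sub_one_sq_le hu
      _ = 8 / r ^ 3 * (r * u - r) ^ 4 + r * u / (2 * r ^ 2) := by
          field_simp
          ring

theorem evariance_poissonInformationError_le {r : ℝ≥0} (hr : 1 ≤ r) :
    eVar[poissonInformationError r; Po(r)] ≤ ENNReal.ofReal (33 / r) := by
  set f := poissonInformationError r
  have hint4 := (integrable_natCast_sub_pow_poissonMeasure r r 4).const_mul (8 / r ^ 3 : ℝ)
  have hint1 : Integrable (fun n : ℕ ↦ (n : ℝ) / (2 * r ^ 2)) Po(r) := by
    simpa using (integrable_natCast_sub_pow_poissonMeasure r 0 1).div_const (2 * r ^ 2 : ℝ)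
  calc eVar[f; Po(r)] ≤ ∫⁻ n : ℕ, n * ENNReal.ofReal ((f n - f (n - 1)) ^ 2) ∂Po(r) :=
        evariance_poissonMeasure_le_lintegral_natCast_mul_sq_sub r f
    _ = ∫⁻ n : ℕ, ENNReal.ofReal (n * (f n - f (n - 1)) ^ 2) ∂Po(r) := by
        simp only [ENNReal.ofReal_mul (Nat.cast_nonneg _), ENNReal.ofReal_natCast]
    _ ≤ ∫⁻ n : ℕ, ENNReal.ofReal (8 / r ^ 3 * (n - r) ^ 4 + n / (2 * r ^ 2)) ∂Po(r) := by
        gcongr with n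
        exact natCast_mul_sq_poissonInformationError_sub_le (by positivity) n
    _ = ENNReal.ofReal (∫ n : ℕ, (8 / r ^ 3 * (n - r) ^ 4 + n / (2 * r ^ 2) : ℝ) ∂Po(r)) :=
        (ofReal_integral_eq_lintegral_ofReal (hint4.add hint1)
          (.of_forall fun n ↦ by simp only [Pi.add_apply, Pi.zero_apply]; positivity)).symm
    _ = ENNReal.ofReal (8 / r ^ 3 * (3 * r ^ 2 + r) + r / (2 * r ^ 2)) := by
        rw [integral_add hint4 hint1, integral_const_mul, integral_div,
          integral_natCast_sub_pow_four_poissonMeasure, integral_natCast_poissonMeasure]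
    _ ≤ ENNReal.ofReal (33 / r) := by
        gcongr
        field_simp
        linarith [NNReal.one_le_coe.2 hr]

theorem memLp_poissonInformationError {r : ℝ≥0} (hr : 1 ≤ r) :
    MemLp (poissonInformationError r) 2 Po(r) :=
  (evariance_lt_top_iff_memLp .of_discrete).1
    ((evariance_poissonInformationError_le hr).trans_lt ENNReal.ofReal_lt_top)

theorem variance_poissonInformationError_le {r : ℝ≥0} (hr : 1 ≤ r) :
    Var[poissonInformationError r; Po(r)] ≤ 33 / r :=
  ENNReal.toReal_le_of_le_ofReal (by positivity) (evariance_poissonInformationError_le hr)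

theorem abs_variance_information_poissonMeasure_sub_half_le {r : ℝ≥0} (hr : 1 ≤ r) :
    |Var[information Po(r); Po(r)] - 1 / 2| ≤ 46 / √r := by
  have hr' : (1 : ℝ) ≤ r := hr
  have hinv : 1 / (r : ℝ) ≤ 1 / √r := by
    gcongr
    exact sqrt_le_self_iff.2 (.inr hr')
  have hsplit : information Po(r) =
      (fun n : ℕ ↦ gaussianInformation r n) + poissonInformationError r := by
    funext n
    simp [poissonInformationError]
  have hgauss := variance_gaussianInformation_poissonMeasure (r := r) (by positivity)
  have hgauss_le : √(1 / 2 + 1 / (4 * r)) ≤ 1 := by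
    rw [sqrt_le_one]
    have : 1 / (4 * r : ℝ) ≤ 1 / 4 := by gcongr; linarith
    linarith
  have herror_le : √Var[poissonInformationError r; Po(r)] ≤ 6 / √r := by
    calc √Var[poissonInformationError r; Po(r)] ≤ √(6 ^ 2 / r) := by
          gcongr
          exact (variance_poissonInformationError_le hr).trans (by gcongr; norm_num)
      _ = 6 / √r := by rw [sqrt_div (by norm_num), sqrt_sq (by norm_num)]
  have hpert := abs_variance_add_sub_variance_le (memLp_gaussianInformation_poissonMeasure r)
    (memLp_poissonInformationError hr)
  rw [← hsplit, hgauss] at hpert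
  calc |Var[information Po(r); Po(r)] - 1 / 2|
      ≤ |Var[information Po(r); Po(r)] - (1 / 2 + 1 / (4 * r))| + 1 / (4 * r) := by
        refine (abs_sub_le _ (1 / 2 + 1 / (4 * r) : ℝ) _).trans_eq ?_
        rw [add_sub_cancel_left, abs_of_nonneg (by positivity : 0 ≤ 1 / (4 * (r : ℝ)))]
    _ ≤ 2 * (1 * (6 / √r)) + 33 / r + 1 / (4 * r) := by
        gcongr
        refine hpert.trans ?_
        gcongr
        exact variance_poissonInformationError_le hr
    _ = 12 * (1 / √r) + (33 + 1 / 4) * (1 / r) := by ring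
    _ ≤ 12 * (1 / √r) + (33 + 1 / 4) * (1 / √r) := by gcongr
    _ ≤ 46 * (1 / √r) := by
        rw [← add_mul]
        gcongr
        norm_num
    _ = 46 / √r := mul_one_div 46 _

theorem variance_information_poissonMeasure_eq_tsum (r : ℝ≥0) :
    let p : ℕ → ℝ := fun x ↦ rexp (-r) * r ^ x / (x)!
    Var[information Po(r); Po(r)] =
      ∑' x, p x * (-log (p x) - -∑' x, p x * log (p x)) ^ 2 := by
  rw [variance_eq_integral .of_discrete]
  simp only [integral_poissonMeasure, information, poissonMeasure_real_singleton, smul_eq_mul,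
    mul_neg, tsum_neg]

theorem poisson_information_variance_large_time_general {s : ℝ} (hs : 1 ≤ s) :
    let p : ℕ → ℝ := fun x ↦ rexp (-s) * s ^ x / (x)!
    let H : ℝ := -∑' x, p x * log (p x)
    |(∑' x, p x * (-log (p x) - H) ^ 2) - 1 / 2| ≤ 46 / √s := by
  lift s to ℝ≥0 using zero_le_one.trans hs
  intro p H
  rw [← variance_information_poissonMeasure_eq_tsum]
  exact abs_variance_information_poissonMeasure_sub_half_le hs

end

/-- Large-time asymptotic of the variance of the Poisson information: with
`p_s` the Poisson(s) pmf, `H(s)` its entropy and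
`V(s) = ∑_x p_s(x)·(-log p_s(x) - H(s))²` the variance of `-log p_s(X_s)`,
there are constants `C > 0` and `s₀ ≥ e` such that `|V(s) - 1/2| ≤ C·s^{-1/4}·log s`
for all `s ≥ s₀`. -/
theorem poisson_information_variance_large_time : ∃ C s₀ : ℝ, 0 < C ∧ Real.exp 1 ≤ s₀ ∧
    ∀ s : ℝ, s₀ ≤ s →
      let p : ℕ → ℝ := fun x => Real.exp (-s) * s ^ x / (Nat.factorial x : ℝ)
      let H : ℝ := -∑' x : ℕ, p x * Real.log (p x)
      |(∑' x : ℕ, p x * (-Real.log (p x) - H)^2) - 1/2| ≤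
        C * s ^ (-(1/4 : ℝ)) * Real.log s := by
  refine ⟨46, exp 1, by norm_num, le_rfl, fun s hs ↦
    (poisson_information_variance_large_time_general ((one_le_exp zero_le_one).trans hs)).trans ?_⟩
  rw [← mul_one_div, mul_assoc]
  exact mul_le_mul_of_nonneg_left (one_div_sqrt_le_rpow_mul_log hs) (by norm_num)
end
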